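/- Let q ≥ 2 be an even integer, let λ_i > 0 for i ∈ ℕ, and let {f_n^{(i)} : n, i ∈ ℕ} be a bi-indexed family of symmetric functions in L²(ℝ₊^q) such that: ⟨f_n^{(i)}, f_n^{(j)}⟩ → δ_{ij} λ_i for all i, j; ‖f_n^{(i)} ⌢_{q/2} f_n^{(i)} − f_n^{(i)}‖ → 0 for all i; ‖f_n^{(i)} ⌢_r f_n^{(i)}‖ → 0 for all i and all 1 ≤ r ≤ q−1 with r ≠ q/2; and ‖f_n^{(i)} ⌢_r f_n^{(j)}‖ → 0 for all i ≠ j and all 1 ≤ r ≤ q−1. Then for every integer m ≥ 2 and every function χ : {1,…,m} → ℕ, the sum over all tuples (r₁,…,r_{m−1}) ∈ D_m of the scalar iterated contractions (⋯((f_n^{(χ(1))} ⌢_{r₁} f_n^{(χ(2))}) ⌢_{r₂} f_n^{(χ(3))})⋯) ⌢_{r_{m−1}} f_n^{(χ(m))} converges, as n → ∞, to Σ_{π ∈ NC_{≥2}(m), π ≤ χ} Π_{V ∈ π} λ_{χ(V)}. -/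

import Mathlib

/-!
Read the orders of a tuple in `D_m` as marks: order `0` opens a block, order `q / 2` continues the
innermost open block, order `q` closes it, and the first factor opens a block. The conditions
defining `B_m` say that the resulting word is balanced, and balanced words are the same as
non-crossing partitions all of whose blocks have at least two elements.

By Cauchy–Schwarz, `‖F ⌢_r g‖ ≤ ‖F‖ ‖g‖`, so `L²` errors survive further contractions. Hence, after
each factor, the iterated contraction is asymptotically a scalar multiple of the tensor product of
the functions that opened the currently open blocks: order `0` appends a factor, order `q / 2` keeps
or annihilates the last factor `f_n^{(i)}` according to whether the new function has the same index,
and order `q` removes it, with the coefficient `lim ⟨f_n^{(i)}, f_n^{(j)}⟩ = δ_{ij} λ_i`. When all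
blocks are closed, what remains is `∏ λ_{χ(V)}` over the blocks if `π ≤ χ`, and `0` otherwise.
-/

open MeasureTheory Filter Topology

noncomputable section

/-- The positive orthant `ℝ₊ⁿ` inside `ℝⁿ`. -/
def posOrthant (n : ℕ) : Set (Fin n → ℝ) := {x | ∀ i, 0 ≤ x i}

/-- Lebesgue measure restricted to the positive orthant; the measure underlying `L²(ℝ₊ⁿ)`. -/
def μpos (n : ℕ) : MeasureTheory.Measure (Fin n → ℝ) :=
  MeasureTheory.volume.restrict (posOrthant n)

/-- Total extension of a finite tuple, giving the junk value `0` out of range. -/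
def pad {k : ℕ} (t : Fin k → ℝ) (i : ℕ) : ℝ := if h : i < k then t ⟨i, h⟩ else 0

/-- The `L²` inner product `⟨f, g⟩ = ∫ f ⬝ conj g` over the positive orthant. -/
def L2inner (n : ℕ) (f g : (Fin n → ℝ) → ℂ) : ℂ :=
  ∫ x, f x * (starRingEnd ℂ) (g x) ∂(μpos n)

/-- The `L²` norm over the positive orthant. -/
def L2norm (n : ℕ) (f : (Fin n → ℝ) → ℂ) : ℝ :=
  Real.sqrt (∫ x, ‖f x‖ ^ 2 ∂(μpos n))

/-- The adjoint `f*(t₁,…,tₙ) = conj (f (tₙ,…,t₁))`. -/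
def adjF (n : ℕ) (f : (Fin n → ℝ) → ℂ) : (Fin n → ℝ) → ℂ :=
  fun t => (starRingEnd ℂ) (f fun i => t i.rev)

/-- `f` is symmetric when `f = f*` a.e. on the positive orthant. -/
def IsSymmFn (n : ℕ) (f : (Fin n → ℝ) → ℂ) : Prop :=
  ∀ᵐ t ∂(μpos n), f t = adjF n f t

/-- Reindexing a multivariate function along an equality of dimensions. -/
def reindex {a b : ℕ} (h : a = b) (F : (Fin a → ℝ) → ℂ) : (Fin b → ℝ) → ℂ :=
  fun t => F fun j => t (Fin.cast h j)

/-- The integrand (in the `s`-variables) of the `p`-th arc contraction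
`(f ⌢_p g)(t₁,…,t_{m+n-2p}) = ∫ f(t₁,…,t_{m-p},s_p,…,s₁) g(s₁,…,s_p,t_{m-p+1},…,t_{m+n-2p}) ds`. -/
def arcKer (m n p : ℕ) (f : (Fin m → ℝ) → ℂ) (g : (Fin n → ℝ) → ℂ)
    (t : Fin (m + n - 2 * p) → ℝ) (s : Fin p → ℝ) : ℂ :=
  f (fun j => if (j : ℕ) < m - p then pad t j else pad s (m - 1 - (j : ℕ))) *
  g (fun j => if (j : ℕ) < p then pad s j else pad t (m + (j : ℕ) - 2 * p))

/-- The `p`-th arc contraction `f ⌢_p g`. -/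
def arc (m n p : ℕ) (f : (Fin m → ℝ) → ℂ) (g : (Fin n → ℝ) → ℂ) :
    (Fin (m + n - 2 * p) → ℝ) → ℂ :=
  fun t => ∫ s in posOrthant p, arcKer m n p f g t s

/-- The integrand of the star contraction of index `(p, p-1)`:
`(f ⋆_p^{p-1} g)(t₁,…,t_{m+n-2p+1})
  = ∫ f(t₁,…,t_{m-p},t_{m-p+1},s_{p-1},…,s₁) g(s₁,…,s_{p-1},t_{m-p+1},…,t_{m+n-2p+1}) ds`. -/
def starKer (m n p : ℕ) (f : (Fin m → ℝ) → ℂ) (g : (Fin n → ℝ) → ℂ)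
    (t : Fin (m + n + 1 - 2 * p) → ℝ) (s : Fin (p - 1) → ℝ) : ℂ :=
  f (fun j => if (j : ℕ) < m - p + 1 then pad t j else pad s (m - 1 - (j : ℕ))) *
  g (fun j => if (j : ℕ) < p - 1 then pad s j else pad t (m + (j : ℕ) + 1 - 2 * p))

/-- The star contraction `f ⋆_p^{p-1} g` of index `(p, p-1)`. -/
def starC (m n p : ℕ) (f : (Fin m → ℝ) → ℂ) (g : (Fin n → ℝ) → ℂ) :
    (Fin (m + n + 1 - 2 * p) → ℝ) → ℂ :=
  fun t => ∫ s in posOrthant (p - 1), starKer m n p f g t s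

/-- The `q/2`-th arc contraction of two functions of `q` (even) variables,
expressed again as a function of `q` variables. -/
def contrHalf (q : ℕ) (f g : (Fin q → ℝ) → ℂ) : (Fin q → ℝ) → ℂ :=
  fun t => ∫ s in posOrthant (q / 2),
    (f fun j => if (j : ℕ) < q - q / 2 then pad t j else pad s (q - 1 - (j : ℕ))) *
    (g fun j => if (j : ℕ) < q / 2 then pad s j else pad t (q + (j : ℕ) - 2 * (q / 2)))

/-- The full contraction `f ⌢_q g = ∫ f(t₁,…,t_q) g(t_q,…,t₁) dt` of two
functions of `q` variables. -/
def fullContr (q : ℕ) (f g : (Fin q → ℝ) → ℂ) : ℂ :=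
  ∫ t in posOrthant q, f t * g fun i => t i.rev

/-- A `q`-dimensional square (cube): a product of `q` intervals of equal length. -/
def IsCube (q : ℕ) (S : Set (Fin q → ℝ)) : Prop :=
  ∃ (a : Fin q → ℝ) (c : ℝ), S = Set.univ.pi fun i => Set.Icc (a i) (a i + c)

/-- One step of the left-bracketed iterated contraction, keeping track of the dimension. -/
def iterStep (q : ℕ) (acc : (d : ℕ) × ((Fin d → ℝ) → ℂ))
    (pr : ℕ × ((Fin q → ℝ) → ℂ)) : (d : ℕ) × ((Fin d → ℝ) → ℂ) :=
  ⟨acc.1 + q - 2 * pr.1, arc acc.1 q pr.1 acc.2 pr.2⟩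

/-- The left-bracketed iterated contraction `(⋯((f₀ ⌢_{r₁} f₁) ⌢_{r₂} f₂)⋯) ⌢_{r_k} f_k`. -/
def iterArc (q : ℕ) (f0 : (Fin q → ℝ) → ℂ) (l : List (ℕ × ((Fin q → ℝ) → ℂ))) :
    (d : ℕ) × ((Fin d → ℝ) → ℂ) :=
  l.foldl (iterStep q) ⟨q, f0⟩

/-- The value of a (`0`-dimensional, i.e. scalar) iterated contraction. -/
def scalarOf (x : (d : ℕ) × ((Fin d → ℝ) → ℂ)) : ℂ := x.2 fun _ => 0


/-- Membership in `A_m` for tuples `(r₁,…,r_{m-1}) ∈ {0,…,q}^{m-1}` (indexed here by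
`Fin (m-1)`, with position `p : Fin (m-1)` standing for `r_{p+1}`):
`r_p ≤ pq - 2(r₁+⋯+r_{p-1})` for every `p` (for `p = 1` this is `r₁ ≤ q`). -/
def memA16 (q m : ℕ) (r : Fin (m - 1) → Fin (q + 1)) : Prop :=
  ∀ p : Fin (m - 1),
    (r p : ℕ) + 2 * ∑ k ∈ Finset.univ.filter (fun k => k < p), (r k : ℕ)
      ≤ ((p : ℕ) + 1) * q

/-- Membership in `B_m`: tuples of `A_m` with `2(r₁+⋯+r_{m-1}) = mq`. -/
def memB16 (q m : ℕ) (r : Fin (m - 1) → Fin (q + 1)) : Prop :=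
  memA16 q m r ∧ 2 * ∑ k, (r k : ℕ) = m * q

/-- Membership in `D_m = B_m ∩ {0, q/2, q}^{m-1}`. -/
def memD16 (q m : ℕ) (r : Fin (m - 1) → Fin (q + 1)) : Prop :=
  memB16 q m r ∧ ∀ p, ((r p : ℕ) = 0 ∨ (r p : ℕ) = q / 2 ∨ (r p : ℕ) = q)

/-- `P` is a non-crossing partition of `{1,…,m}` (encoded on `Fin m`) all of whose blocks
have at least two elements, on the blocks of which `χ` is constant (`π ≤ χ`). -/
def IsNCge2le (m : ℕ) (χ : Fin m → ℕ) (P : Finset (Finset (Fin m))) : Prop :=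
  (∀ x : Fin m, ∃ B ∈ P, x ∈ B) ∧
  (∀ B ∈ P, ∀ B' ∈ P, B ≠ B' → Disjoint B B') ∧
  (∀ B ∈ P, 2 ≤ B.card) ∧
  (∀ B ∈ P, ∀ B' ∈ P, B ≠ B' →
    ¬ ∃ x u y v : Fin m, x < u ∧ u < y ∧ y < v ∧ x ∈ B ∧ y ∈ B ∧ u ∈ B' ∧ v ∈ B') ∧
  (∀ B ∈ P, ∀ a ∈ B, ∀ b ∈ B, χ a = χ b)

/-- The role of a position in its block: it opens the block, continues it, or closes it. -/
inductive BlockMark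
  | opening
  | middle
  | closing
  deriving DecidableEq

open BlockMark

/-- The blocks that are open before position `k` when the marks of `w` are read from left to right,
innermost block first; a block is named after its first element. -/
def openStack (w : ℕ → BlockMark) : ℕ → List ℕ
  | 0 => []
  | k + 1 => match w k with
    | opening => k :: openStack w k
    | middle => openStack w k
    | closing => (openStack w k).tail

/-- The first element of the block that position `k` belongs to according to the marks `w`. -/
def blockLabel (w : ℕ → BlockMark) (k : ℕ) : ℕ :=
  if w k = opening then k else (openStack w k).headD k

/-- The first `m` marks of `w` describe a partition: no block is continued before it is opened,
and all blocks are closed in the end. Outside `{0, …, m - 1}` the word takes the default value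
`opening`, so that balanced words are determined by their first `m` marks. -/
structure IsBalanced (m : ℕ) (w : ℕ → BlockMark) : Prop where
  openStack_ne_nil : ∀ k < m, w k ≠ opening → openStack w k ≠ []
  openStack_eq_nil : openStack w m = []
  eq_opening : ∀ k, m ≤ k → w k = opening

/-- `b` sends each element of `{0, …, m - 1}` to the least element of its block in a non-crossing
partition all of whose blocks have at least two elements; `b` is the identity elsewhere. -/
structure IsNoncrossingLabelling (m : ℕ) (b : ℕ → ℕ) : Prop where
  le_self : ∀ k, b k ≤ k
  idem : ∀ k, b (b k) = b k
  eq_self : ∀ k, m ≤ k → b k = k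
  exists_ne : ∀ k < m, ∃ j < m, j ≠ k ∧ b j = b k
  noncrossing : ∀ x u y v, x < u → u < y → y < v → v < m → b x = b y → b u = b v → b x = b u

section Stack

variable {m : ℕ} {w : ℕ → BlockMark}

lemma openStack_succ_of_opening {k : ℕ} (h : w k = opening) :
    openStack w (k + 1) = k :: openStack w k := by
  simp only [openStack, h]

lemma openStack_succ_of_middle {k : ℕ} (h : w k = middle) :
    openStack w (k + 1) = openStack w k := by
  simp only [openStack, h]

lemma openStack_succ_of_closing {k : ℕ} (h : w k = closing) :
    openStack w (k + 1) = (openStack w k).tail := by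
  simp only [openStack, h]

lemma lt_and_opening_of_mem_openStack {k a : ℕ} (h : a ∈ openStack w k) :
    a < k ∧ w a = opening := by
  induction k with
  | zero => simp [openStack] at h
  | succ k ih =>
    cases hk : w k with
    | opening =>
      rw [openStack_succ_of_opening hk, List.mem_cons] at h
      rcases h with rfl | h
      · exact ⟨a.lt_succ_self, hk⟩
      · exact ⟨(ih h).1.trans k.lt_succ_self, (ih h).2⟩
    | middle =>
      rw [openStack_succ_of_middle hk] at h
      exact ⟨(ih h).1.trans k.lt_succ_self, (ih h).2⟩
    | closing =>
      rw [openStack_succ_of_closing hk] at h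
      have := ih (List.mem_of_mem_tail h)
      exact ⟨this.1.trans k.lt_succ_self, this.2⟩

lemma openStack_pairwise_gt (w : ℕ → BlockMark) (k : ℕ) : (openStack w k).Pairwise (· > ·) := by
  induction k with
  | zero => exact List.Pairwise.nil
  | succ k ih =>
    cases hk : w k with
    | opening =>
      rw [openStack_succ_of_opening hk]
      exact List.pairwise_cons.2 ⟨fun a ha => (lt_and_opening_of_mem_openStack ha).1, ih⟩
    | middle => rwa [openStack_succ_of_middle hk]
    | closing => rw [openStack_succ_of_closing hk]; exact ih.tail

lemma blockLabel_of_opening {k : ℕ} (h : w k = opening) : blockLabel w k = k := if_pos h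

lemma openStack_eq_blockLabel_cons {k : ℕ} (hne : openStack w k ≠ []) (h : w k ≠ opening) :
    openStack w k = blockLabel w k :: (openStack w k).tail := by
  obtain ⟨a, s, hs⟩ := List.exists_cons_of_ne_nil hne
  simp [blockLabel, h, hs]

lemma mem_openStack_succ {k a : ℕ} (hne : w k ≠ opening → openStack w k ≠ []) :
    a ∈ openStack w (k + 1) ↔
      (a ∈ openStack w k ∨ a = blockLabel w k) ∧ (w k = closing → a ≠ blockLabel w k) := by
  cases hk : w k with
  | opening => simp [openStack_succ_of_opening hk, blockLabel_of_opening hk, or_comm]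
  | middle =>
    have hs := openStack_eq_blockLabel_cons (hne (by simp [hk])) (by simp [hk])
    rw [openStack_succ_of_middle hk, hs]
    simp [or_comm]
  | closing =>
    have hs := openStack_eq_blockLabel_cons (hne (by simp [hk])) (by simp [hk])
    have hlt := openStack_pairwise_gt w k
    rw [hs, List.pairwise_cons] at hlt
    rw [openStack_succ_of_closing hk, hs]
    simp only [List.tail_cons, List.mem_cons]
    grind

lemma IsBalanced.openStack_ne_nil_of_ne_opening (hw : IsBalanced m w) {k : ℕ}
    (h : w k ≠ opening) : openStack w k ≠ [] :=
  hw.openStack_ne_nil k (not_le.1 fun hk => h (hw.eq_opening k hk)) h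

lemma IsBalanced.openStack_eq_cons (hw : IsBalanced m w) {k : ℕ} (h : w k ≠ opening) :
    openStack w k = blockLabel w k :: (openStack w k).tail :=
  openStack_eq_blockLabel_cons (hw.openStack_ne_nil_of_ne_opening h) h

lemma IsBalanced.blockLabel_mem (hw : IsBalanced m w) {k : ℕ} (h : w k ≠ opening) :
    blockLabel w k ∈ openStack w k := by
  rw [hw.openStack_eq_cons h]
  exact List.mem_cons_self

lemma IsBalanced.le_blockLabel (hw : IsBalanced m w) {k a : ℕ} (ha : a ∈ openStack w k) :
    a ≤ blockLabel w k := by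
  by_cases hk : w k = opening
  · rw [blockLabel_of_opening hk]
    exact (lt_and_opening_of_mem_openStack ha).1.le
  · have hlt := openStack_pairwise_gt w k
    rw [hw.openStack_eq_cons hk, List.pairwise_cons] at hlt
    rw [hw.openStack_eq_cons hk, List.mem_cons] at ha
    exact ha.elim le_of_eq fun h => (hlt.1 a h).le

lemma IsBalanced.blockLabel_le (hw : IsBalanced m w) (k : ℕ) : blockLabel w k ≤ k := by
  by_cases hk : w k = opening
  · exact (blockLabel_of_opening hk).le
  · exact (lt_and_opening_of_mem_openStack (hw.blockLabel_mem hk)).1.le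

lemma IsBalanced.opening_blockLabel (hw : IsBalanced m w) (k : ℕ) :
    w (blockLabel w k) = opening := by
  by_cases hk : w k = opening
  · rwa [blockLabel_of_opening hk]
  · exact (lt_and_opening_of_mem_openStack (hw.blockLabel_mem hk)).2

lemma IsBalanced.mem_openStack_of_le (hw : IsBalanced m w) {j k a : ℕ} (haj : a < j) (hjk : j ≤ k)
    (ha : a ∈ openStack w k) : a ∈ openStack w j := by
  induction k, hjk using Nat.le_induction with
  | base => exact ha
  | succ k hjk ih =>
    rcases ((mem_openStack_succ hw.openStack_ne_nil_of_ne_opening).1 ha).1 with h | rfl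
    · exact ih h
    · by_cases hk : w k = opening
      · rw [blockLabel_of_opening hk] at haj; omega
      · exact ih (hw.blockLabel_mem hk)

lemma IsBalanced.blockLabel_mem_openStack (hw : IsBalanced m w) {x k y : ℕ} (hxk : x < k)
    (hky : k ≤ y) (h : blockLabel w x = blockLabel w y) : blockLabel w x ∈ openStack w k := by
  have hxy : blockLabel w y < k := h ▸ (hw.blockLabel_le x).trans_lt hxk
  have hy : w y ≠ opening := fun hy => by rw [blockLabel_of_opening hy] at hxy; omega
  rw [h]
  exact hw.mem_openStack_of_le hxy hky (hw.blockLabel_mem hy)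

lemma IsBalanced.exists_blockLabel_eq (hw : IsBalanced m w) {k a : ℕ} (hk : k ≤ m)
    (ha : a ∈ openStack w k) : ∃ j, k ≤ j ∧ j < m ∧ blockLabel w j = a := by
  induction hk using Nat.decreasingInduction with
  | self => simp [hw.openStack_eq_nil] at ha
  | of_succ k hk ih =>
    by_cases h : a = blockLabel w k
    · exact ⟨k, le_rfl, hk, h.symm⟩
    · obtain ⟨j, hj, hjm, hja⟩ := ih <|
        (mem_openStack_succ hw.openStack_ne_nil_of_ne_opening).2 ⟨Or.inl ha, fun _ => h⟩
      exact ⟨j, by omega, hjm, hja⟩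

lemma IsBalanced.ne_closing_iff (hw : IsBalanced m w) {k : ℕ} (hk : k < m) :
    w k ≠ closing ↔ ∃ j, k < j ∧ j < m ∧ blockLabel w j = blockLabel w k := by
  constructor
  · intro h
    have hmem : blockLabel w k ∈ openStack w (k + 1) :=
      (mem_openStack_succ hw.openStack_ne_nil_of_ne_opening).2 ⟨Or.inr rfl, fun h' => absurd h' h⟩
    exact hw.exists_blockLabel_eq hk hmem
  · rintro ⟨j, hkj, -, h⟩ hclosing
    have := hw.blockLabel_mem_openStack k.lt_succ_self hkj h.symm
    exact ((mem_openStack_succ hw.openStack_ne_nil_of_ne_opening).1 this).2 hclosing rfl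

lemma IsBalanced.isNoncrossingLabelling (hw : IsBalanced m w) :
    IsNoncrossingLabelling m (blockLabel w) where
  le_self := hw.blockLabel_le
  idem k := blockLabel_of_opening (hw.opening_blockLabel k)
  eq_self k hk := blockLabel_of_opening (hw.eq_opening k hk)
  exists_ne k hk := by
    by_cases h : w k = opening
    · obtain ⟨j, hkj, hj, h'⟩ := (hw.ne_closing_iff hk).1 (by simp [h])
      exact ⟨j, hj, hkj.ne', h'⟩
    · have := (lt_and_opening_of_mem_openStack (hw.blockLabel_mem h)).1
      exact ⟨_, this.trans hk, this.ne, blockLabel_of_opening (hw.opening_blockLabel k)⟩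
  noncrossing x u y v hxu huy hyv _ hxy huv := by
    refine le_antisymm (hw.le_blockLabel (hw.blockLabel_mem_openStack hxu huy.le hxy)) ?_
    rw [hxy]
    exact hw.le_blockLabel (hw.blockLabel_mem_openStack huy hyv.le huv)

end Stack

section Labelling

variable {m : ℕ} {b : ℕ → ℕ}

open scoped Classical in
/-- The word of marks of a labelling, inverse to `blockLabel`. -/
def markOf (m : ℕ) (b : ℕ → ℕ) (k : ℕ) : BlockMark :=
  if b k = k then opening else if ∃ z, k < z ∧ z < m ∧ b z = b k then middle else closing

lemma markOf_eq_opening_iff {k : ℕ} : markOf m b k = opening ↔ b k = k := by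
  unfold markOf
  split_ifs <;> simp_all

lemma IsNoncrossingLabelling.markOf_eq_closing_iff (hb : IsNoncrossingLabelling m b) {k : ℕ}
    (hk : k < m) : markOf m b k = closing ↔ ¬ ∃ z, k < z ∧ z < m ∧ b z = b k := by
  unfold markOf
  split_ifs with hbk h <;> simp only [false_iff, not_not, true_iff]
  · obtain ⟨j, hjm, hjk, hj⟩ := hb.exists_ne k hk
    have := hb.le_self j
    exact ⟨j, by omega, hjm, hj⟩
  · exact h
  · exact h

lemma IsNoncrossingLabelling.label_le_label (hb : IsNoncrossingLabelling m b) {k z : ℕ}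
    (hkz : k ≤ z) (hz : z < m) (h : b z < k) : b z ≤ b k := by
  rcases hkz.eq_or_lt with rfl | hkz
  · rfl
  · by_contra! hlt
    have := hb.noncrossing (b k) (b z) k z hlt h hkz hz (hb.idem k) (hb.idem z)
    rw [hb.idem, hb.idem] at this
    exact hlt.ne this

lemma headD_eq_of_pairwise_gt {l : List ℕ} (hl : l.Pairwise (· > ·)) {a d : ℕ}
    (ha : a ∈ l) (hle : ∀ x ∈ l, x ≤ a) : l.headD d = a := by
  cases l with
  | nil => simp at ha
  | cons c l =>
    rcases List.mem_cons.1 ha with rfl | ha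
    · rfl
    · exact absurd (hle c List.mem_cons_self) (not_le.2 ((List.pairwise_cons.1 hl).1 a ha))

lemma IsNoncrossingLabelling.blockLabel_markOf_of_mem_iff (hb : IsNoncrossingLabelling m b) {k : ℕ}
    (hk : k < m)
    (hmem : ∀ a, a ∈ openStack (markOf m b) k ↔ a < k ∧ ∃ z, k ≤ z ∧ z < m ∧ b z = a) :
    (markOf m b k ≠ opening → b k ∈ openStack (markOf m b) k) ∧
      blockLabel (markOf m b) k = b k := by
  have hbk (h : markOf m b k ≠ opening) : b k ∈ openStack (markOf m b) k :=
    (hmem _).2 ⟨(hb.le_self k).lt_of_ne (mt markOf_eq_opening_iff.2 h), k, le_rfl, hk, rfl⟩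
  refine ⟨hbk, ?_⟩
  by_cases h : markOf m b k = opening
  · rw [blockLabel_of_opening h, markOf_eq_opening_iff.1 h]
  · rw [blockLabel, if_neg h]
    refine headD_eq_of_pairwise_gt (openStack_pairwise_gt _ _) (hbk h) fun a ha => ?_
    obtain ⟨hak, z, hkz, hz, rfl⟩ := (hmem a).1 ha
    exact hb.label_le_label hkz hz hak

lemma IsNoncrossingLabelling.mem_openStack_markOf (hb : IsNoncrossingLabelling m b) {k : ℕ}
    (hk : k ≤ m) (a : ℕ) :
    a ∈ openStack (markOf m b) k ↔ a < k ∧ ∃ z, k ≤ z ∧ z < m ∧ b z = a := by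
  induction k generalizing a with
  | zero => simp [openStack]
  | succ k ih =>
    have ih := ih (by omega)
    obtain ⟨hmem, hlabel⟩ := hb.blockLabel_markOf_of_mem_iff hk ih
    rw [mem_openStack_succ fun h => List.ne_nil_of_mem (hmem h), ih, hlabel,
      hb.markOf_eq_closing_iff hk]
    have hle := hb.le_self k
    constructor
    · rintro ⟨⟨hak, z, hkz, hz, rfl⟩ | rfl, hclosing⟩
      · rcases hkz.eq_or_lt with rfl | hkz
        · exact ⟨by omega, by_contra fun h => hclosing h rfl⟩
        · exact ⟨by omega, z, hkz, hz, rfl⟩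
      · exact ⟨by omega, by_contra fun h => hclosing h rfl⟩
    · rintro ⟨hak, z, hkz, hz, rfl⟩
      refine ⟨?_, fun h hzk => h ⟨z, hkz, hz, hzk⟩⟩
      rcases (Nat.lt_succ_iff.1 hak).eq_or_lt with rfl | hak
      · exact Or.inr (hb.idem z).symm
      · exact Or.inl ⟨hak, z, by omega, hz, rfl⟩

lemma IsNoncrossingLabelling.isBalanced_markOf (hb : IsNoncrossingLabelling m b) :
    IsBalanced m (markOf m b) where
  openStack_ne_nil k hk h := List.ne_nil_of_mem <|
    (hb.blockLabel_markOf_of_mem_iff hk (hb.mem_openStack_markOf hk.le)).1 h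
  openStack_eq_nil := by
    refine List.eq_nil_iff_forall_not_mem.2 fun a ha => ?_
    obtain ⟨-, z, hmz, hzm, -⟩ := (hb.mem_openStack_markOf le_rfl a).1 ha
    omega
  eq_opening k hk := markOf_eq_opening_iff.2 (hb.eq_self k hk)

lemma IsNoncrossingLabelling.blockLabel_markOf (hb : IsNoncrossingLabelling m b) :
    blockLabel (markOf m b) = b := by
  funext k
  rcases lt_or_ge k m with hk | hk
  · exact (hb.blockLabel_markOf_of_mem_iff hk (hb.mem_openStack_markOf hk.le)).2
  · rw [blockLabel_of_opening (markOf_eq_opening_iff.2 (hb.eq_self k hk)), hb.eq_self k hk]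

lemma IsBalanced.markOf_blockLabel {w : ℕ → BlockMark} (hw : IsBalanced m w) :
    markOf m (blockLabel w) = w := by
  funext k
  rcases lt_or_ge k m with hk | hk
  · have hopening : blockLabel w k = k ↔ w k = opening :=
      ⟨fun h => h ▸ hw.opening_blockLabel k, blockLabel_of_opening⟩
    have hclosing := hw.ne_closing_iff hk
    unfold markOf
    cases h : w k <;> simp_all
  · rw [hw.eq_opening k hk, markOf_eq_opening_iff, blockLabel_of_opening (hw.eq_opening k hk)]

end Labelling

section Fibers

variable {m : ℕ} {b b' : ℕ → ℕ} {χ : Fin m → ℕ}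

/-- The block of `x` in the partition described by the labelling `b`. -/
def fiber (m : ℕ) (b : ℕ → ℕ) (x : Fin m) : Finset (Fin m) :=
  Finset.univ.filter fun y => b y = b x

/-- The partition of `Fin m` described by the labelling `b`. -/
def fibers (m : ℕ) (b : ℕ → ℕ) : Finset (Finset (Fin m)) :=
  Finset.univ.image (fiber m b)

lemma mem_fiber {x y : Fin m} : y ∈ fiber m b x ↔ b y = b x := by
  simp [fiber]

lemma fiber_mem_fibers (x : Fin m) : fiber m b x ∈ fibers m b :=
  Finset.mem_image_of_mem _ (Finset.mem_univ x)

lemma fiber_eq_fiber_iff {x y : Fin m} : fiber m b x = fiber m b y ↔ b x = b y :=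
  ⟨fun h => mem_fiber.1 (h ▸ mem_fiber.2 rfl), fun h => by simp only [fiber, h]⟩

lemma forall_mem_fibers {p : Finset (Fin m) → Prop} :
    (∀ B ∈ fibers m b, p B) ↔ ∀ x, p (fiber m b x) := by
  simp [fibers]

lemma IsNoncrossingLabelling.two_le_card_fiber (hb : IsNoncrossingLabelling m b) (x : Fin m) :
    2 ≤ (fiber m b x).card := by
  obtain ⟨j, hjm, hjx, hj⟩ := hb.exists_ne x x.2
  exact Finset.one_lt_card.2 ⟨⟨j, hjm⟩, mem_fiber.2 hj, x, mem_fiber.2 rfl,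
    fun h => hjx (congrArg Fin.val h)⟩

lemma IsNoncrossingLabelling.isNCge2le_fibers_iff (hb : IsNoncrossingLabelling m b) :
    IsNCge2le m χ (fibers m b) ↔ ∀ x y : Fin m, b x = b y → χ x = χ y := by
  simp only [IsNCge2le, forall_mem_fibers, ne_eq, fiber_eq_fiber_iff]
  refine ⟨fun h x y hxy => h.2.2.2.2 y x (mem_fiber.2 hxy) y (mem_fiber.2 rfl), fun h =>
    ⟨fun x => ⟨_, fiber_mem_fibers x, mem_fiber.2 rfl⟩, fun x y hxy => ?_, hb.two_le_card_fiber,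
      fun z z' hz => ?_, fun z x hx y hy => h x y ?_⟩⟩
  · refine Finset.disjoint_left.2 fun a hx hy => hxy ?_
    rw [← mem_fiber.1 hx, mem_fiber.1 hy]
  · rintro ⟨x, u, y, v, hxu, huy, hyv, hx, hy, hu, hv⟩
    rw [mem_fiber] at hx hy hu hv
    exact hz (hx ▸ hu ▸ hb.noncrossing x u y v hxu huy hyv v.2 (hx.trans hy.symm)
      (hu.trans hv.symm))
  · rw [mem_fiber.1 hx, mem_fiber.1 hy]

lemma IsNoncrossingLabelling.eq_of_fibers_eq (hb : IsNoncrossingLabelling m b)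
    (hb' : IsNoncrossingLabelling m b') (h : fibers m b = fibers m b') : b = b' := by
  have hle {b b' : ℕ → ℕ} (hb : IsNoncrossingLabelling m b) (hb' : IsNoncrossingLabelling m b')
      (h : fibers m b = fibers m b') (k : Fin m) : b' k ≤ b k := by
    obtain ⟨x, -, hx⟩ := Finset.mem_image.1 (h ▸ fiber_mem_fibers k : fiber m b k ∈ fibers m b')
    have hk : b' k = b' x := mem_fiber.1 (hx ▸ mem_fiber.2 rfl)
    have hbk : (⟨b k, (hb.le_self k).trans_lt k.2⟩ : Fin m) ∈ fiber m b' x :=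
      hx ▸ mem_fiber.2 (hb.idem k)
    rw [hk, ← mem_fiber.1 hbk]
    exact hb'.le_self _
  funext k
  rcases lt_or_ge k m with hk | hk
  · exact le_antisymm (hle hb' hb h.symm ⟨k, hk⟩) (hle hb hb' h ⟨k, hk⟩)
  · rw [hb.eq_self k hk, hb'.eq_self k hk]

/-- The least element of the block of `k` when every `x` belongs to the block `blk x`. -/
def minLabel (blk : Fin m → Finset (Fin m)) (hblk : ∀ x, x ∈ blk x) (k : ℕ) : ℕ :=
  if hk : k < m then (blk ⟨k, hk⟩).min' ⟨_, hblk _⟩ else k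

lemma minLabel_eq_iff {blk : Fin m → Finset (Fin m)} (hblk : ∀ x, x ∈ blk x)
    (heq : ∀ x y, x ∈ blk y → blk x = blk y) {x y : Fin m} :
    minLabel blk hblk x = minLabel blk hblk y ↔ blk x = blk y := by
  simp only [minLabel, Fin.is_lt, dif_pos, Fin.eta, Fin.val_inj]
  refine ⟨fun h => ?_, fun h => by simp only [h]⟩
  rw [← heq _ _ (Finset.min'_mem (blk x) ⟨_, hblk _⟩), h,
    heq _ _ (Finset.min'_mem (blk y) ⟨_, hblk _⟩)]

lemma exists_minLabel_eq {blk : Fin m → Finset (Fin m)} (hblk : ∀ x, x ∈ blk x)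
    (heq : ∀ x y, x ∈ blk y → blk x = blk y) (x : Fin m) :
    ∃ y : Fin m, minLabel blk hblk x = y ∧ y ≤ x ∧ blk y = blk x :=
  ⟨(blk x).min' ⟨_, hblk x⟩, by simp [minLabel], Finset.min'_le _ _ (hblk x),
    heq _ _ (Finset.min'_mem _ _)⟩

lemma isNoncrossingLabelling_minLabel {blk : Fin m → Finset (Fin m)} (hblk : ∀ x, x ∈ blk x)
    (heq : ∀ x y, x ∈ blk y → blk x = blk y) (hcard : ∀ x, 2 ≤ (blk x).card)
    (hnc : ∀ x u y v, x < u → u < y → y < v → blk x = blk y → blk u = blk v → blk x = blk u) :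
    IsNoncrossingLabelling m (minLabel blk hblk) := by
  have hiff {x y : Fin m} := minLabel_eq_iff hblk heq (x := x) (y := y)
  have hmin := exists_minLabel_eq hblk heq
  have hself {k : ℕ} (hk : ¬ k < m) : minLabel blk hblk k = k := dif_neg hk
  refine ⟨fun k => ?_, fun k => ?_, fun k hk => hself hk.not_gt, fun k hk => ?_,
    fun x u y v hxu huy hyv hv hxy huv => ?_⟩
  · by_cases hk : k < m
    · obtain ⟨y, hy, hle, -⟩ := hmin ⟨k, hk⟩
      exact hy.trans_le hle
    · exact (hself hk).le
  · by_cases hk : k < m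
    · obtain ⟨y, hy, -, hblky⟩ := hmin ⟨k, hk⟩
      rw [hy, hiff.2 hblky, ← hy]
    · rw [hself hk, hself hk]
  · obtain ⟨j, hj, hjk⟩ := Finset.exists_mem_ne (hcard ⟨k, hk⟩) ⟨k, hk⟩
    exact ⟨j, j.2, fun h => hjk (Fin.ext h), (hiff (y := ⟨k, hk⟩)).2 (heq _ _ hj)⟩
  · exact (hiff (x := ⟨x, by omega⟩) (y := ⟨u, by omega⟩)).2 <|
      hnc _ _ ⟨y, by omega⟩ ⟨v, hv⟩ hxu huy hyv (hiff.1 hxy) (hiff.1 huv)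

lemma IsNCge2le.exists_isNoncrossingLabelling {P : Finset (Finset (Fin m))}
    (hP : IsNCge2le m χ P) : ∃ b, IsNoncrossingLabelling m b ∧ fibers m b = P := by
  obtain ⟨hcover, hdisj, hcard, hnc, -⟩ := hP
  choose blk hblkP hblk using hcover
  have huniq {x : Fin m} {B : Finset (Fin m)} (hB : B ∈ P) (hx : x ∈ B) : blk x = B :=
    by_contra fun h => Finset.disjoint_left.1 (hdisj _ (hblkP x) _ hB h) (hblk x) hx
  have heq (x y : Fin m) (h : x ∈ blk y) : blk x = blk y := huniq (hblkP y) h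
  refine ⟨minLabel blk hblk, isNoncrossingLabelling_minLabel hblk heq (fun x => hcard _ (hblkP x))
    fun x u y v hxu huy hyv hxy huv => by_contra fun h => hnc _ (hblkP x) _ (hblkP u) h
      ⟨x, u, y, v, hxu, huy, hyv, hblk x, hxy ▸ hblk y, hblk u, huv ▸ hblk v⟩, ?_⟩
  have hfiber (x : Fin m) : fiber m (minLabel blk hblk) x = blk x := by
    ext y
    rw [mem_fiber, minLabel_eq_iff hblk heq]
    exact ⟨fun h => h ▸ hblk y, heq y x⟩
  ext B
  simp only [fibers, Finset.mem_image, Finset.mem_univ, true_and, hfiber]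
  refine ⟨fun ⟨x, hx⟩ => hx ▸ hblkP x, fun hB => ?_⟩
  obtain ⟨x, hx⟩ := Finset.card_pos.1 (two_pos.trans_le (hcard B hB))
  exact ⟨x, huniq hB hx⟩

lemma IsBalanced.fibers_eq_image_closing {w : ℕ → BlockMark} (hw : IsBalanced m w) :
    fibers m (blockLabel w) =
      (Finset.univ.filter fun x : Fin m => w x = closing).image (fiber m (blockLabel w)) := by
  refine (Finset.image_subset_image (Finset.filter_subset _ _)).antisymm' fun B hB => ?_
  obtain ⟨x, -, rfl⟩ := Finset.mem_image.1 hB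
  obtain ⟨z, hz, hmax⟩ := (fiber m (blockLabel w) x).exists_maximal ⟨x, mem_fiber.2 rfl⟩
  have hzx := mem_fiber.1 hz
  refine Finset.mem_image.2 ⟨z, Finset.mem_filter.2 ⟨Finset.mem_univ _, ?_⟩,
    fiber_eq_fiber_iff.2 hzx⟩
  by_contra h
  obtain ⟨j, hzj, hj, hjz⟩ := (hw.ne_closing_iff z.2).1 h
  have hle : (⟨j, hj⟩ : Fin m) ≤ z := hmax (mem_fiber.2 (hjz.trans hzx)) hzj.le
  exact absurd hzj hle.not_gt

lemma IsBalanced.prod_fibers {M : Type*} [CommMonoid M] {w : ℕ → BlockMark} (hw : IsBalanced m w)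
    (hχ : ∀ x y : Fin m, blockLabel w x = blockLabel w y → χ x = χ y) (F : ℕ → M) :
    ∏ B ∈ fibers m (blockLabel w), F (B.sup χ) =
      ∏ x : Fin m, if w x = closing then F (χ x) else 1 := by
  have hinj : Set.InjOn (fiber m (blockLabel w))
      (Finset.univ.filter fun x : Fin m => w x = closing) := by
    intro x hx y hy hxy
    have hxy := fiber_eq_fiber_iff.1 hxy
    simp only [Finset.coe_filter, Finset.mem_univ, true_and, Set.mem_ofPred_eq] at hx hy
    rcases lt_trichotomy x y with hlt | rfl | hlt
    · exact absurd hx ((hw.ne_closing_iff x.2).2 ⟨y, hlt, y.2, hxy.symm⟩)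
    · rfl
    · exact absurd hy ((hw.ne_closing_iff y.2).2 ⟨x, hlt, x.2, hxy⟩)
  rw [hw.fibers_eq_image_closing, Finset.prod_image hinj, Finset.prod_filter]
  refine Finset.prod_congr rfl fun x _ => ?_
  have hsup : (fiber m (blockLabel w) x).sup χ = χ x :=
    (Finset.sup_congr rfl fun y hy => hχ y x (mem_fiber.1 hy)).trans
      (Finset.sup_const ⟨x, mem_fiber.2 rfl⟩ _)
  rw [hsup]

end Fibers

section Orders

variable {q m : ℕ} {w : ℕ → BlockMark}

/-- The order of the contraction performed at a position with the given mark. -/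
def BlockMark.order (q : ℕ) : BlockMark → ℕ
  | opening => 0
  | middle => q / 2
  | closing => q

/-- The mark of a position where a contraction of order `e` is performed, for `e ∈ {0, q / 2, q}`;
other values of `e` give the junk value `middle`. -/
def BlockMark.ofOrder (q e : ℕ) : BlockMark :=
  if e = 0 then opening else if e = q then closing else middle

lemma BlockMark.order_ofOrder {e : ℕ} (he : e = 0 ∨ e = q / 2 ∨ e = q) :
    (ofOrder q e).order q = e := by
  unfold ofOrder
  split_ifs <;> simp only [order] <;> omega

lemma BlockMark.order_mem (x : BlockMark) : x.order q = 0 ∨ x.order q = q / 2 ∨ x.order q = q := by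
  cases x <;> simp [order]

lemma BlockMark.ofOrder_order (hq : 2 ≤ q) (x : BlockMark) : ofOrder q (x.order q) = x := by
  cases x with
  | opening => rfl
  | middle => rw [ofOrder, order, if_neg (by omega), if_neg (by omega)]
  | closing => rw [ofOrder, order, if_neg (by omega), if_pos rfl]

lemma BlockMark.order_le (x : BlockMark) : x.order q ≤ q := by
  cases x <;> simp only [order] <;> omega

lemma BlockMark.order_pos (hq : 2 ≤ q) {x : BlockMark} (hx : x ≠ opening) : 0 < x.order q := by
  cases x <;> simp only [order] at * <;> first | omega | contradiction

lemma length_openStack_mul_add (hq : q % 2 = 0) {k : ℕ}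
    (hw : ∀ j < k, w j ≠ opening → openStack w j ≠ []) :
    (openStack w k).length * q + 2 * ∑ j ∈ Finset.range k, (w j).order q = k * q := by
  induction k with
  | zero => simp [openStack]
  | succ k ih =>
    have ih := ih fun j hj => hw j (by omega)
    rw [Finset.sum_range_succ, add_one_mul k]
    cases hk : w k with
    | opening =>
      rw [openStack_succ_of_opening hk, List.length_cons, add_one_mul, BlockMark.order]
      omega
    | middle =>
      rw [openStack_succ_of_middle hk, BlockMark.order]
      omega
    | closing =>
      obtain ⟨a, s, hs⟩ := List.exists_cons_of_ne_nil (hw k k.lt_succ_self (by simp [hk]))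
      rw [hs, List.length_cons, add_one_mul] at ih
      rw [openStack_succ_of_closing hk, hs, List.tail_cons, BlockMark.order]
      omega

lemma isBalanced_iff_sum_order (hq : 2 ≤ q) (hqe : q % 2 = 0)
    (hw : ∀ k, m ≤ k → w k = opening) :
    IsBalanced m w ↔
      (∀ k < m, (w k).order q + 2 * ∑ j ∈ Finset.range k, (w j).order q ≤ k * q) ∧
        2 * ∑ j ∈ Finset.range m, (w j).order q = m * q := by
  constructor
  · intro h
    have hlen := length_openStack_mul_add hqe h.openStack_ne_nil
    refine ⟨fun k hk => ?_, by simpa [h.openStack_eq_nil] using hlen⟩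
    rw [← length_openStack_mul_add hqe fun j hj => h.openStack_ne_nil j (hj.trans hk)]
    gcongr
    by_cases hopening : w k = opening
    · simp [hopening, BlockMark.order]
    · exact ((w k).order_le).trans <| Nat.le_mul_of_pos_left q <|
        List.length_pos_of_ne_nil (h.openStack_ne_nil k hk hopening)
  · rintro ⟨hle, heq⟩
    have hne : ∀ k < m, w k ≠ opening → openStack w k ≠ [] := by
      intro k
      induction k using Nat.strong_induction_on with
      | _ k ih =>
        intro hk hopening hnil
        have hlen := length_openStack_mul_add hqe fun j hj => ih j hj (hj.trans hk)
        have := hle k hk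
        have := BlockMark.order_pos hq hopening
        rw [hnil, List.length_nil] at hlen
        omega
    have hlen := length_openStack_mul_add hqe hne
    refine ⟨hne, List.length_eq_zero_iff.1 ?_, hw⟩
    rw [heq, Nat.add_eq_right, mul_eq_zero] at hlen
    omega

/-- The word of marks of an iterated contraction of orders `r`: the first factor opens a block. -/
def contractionWord (q : ℕ) (r : Fin (m - 1) → Fin (q + 1)) : ℕ → BlockMark
  | 0 => opening
  | k + 1 => if hk : k < m - 1 then BlockMark.ofOrder q (r ⟨k, hk⟩) else opening

variable {r r' : Fin (m - 1) → Fin (q + 1)}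

lemma contractionWord_succ (p : Fin (m - 1)) :
    contractionWord q r (p + 1) = BlockMark.ofOrder q (r p) := dif_pos p.2

lemma contractionWord_of_le (k : ℕ) (hk : m ≤ k) : contractionWord q r k = opening := by
  cases k with
  | zero => rfl
  | succ k => exact dif_neg (by omega)

lemma sum_range_order_contractionWord
    (hr : ∀ p : Fin (m - 1), (contractionWord q r (p + 1)).order q = r p) {k : ℕ}
    (hk : k ≤ m - 1) :
    ∑ j ∈ Finset.range (k + 1), (contractionWord q r j).order q =
      ∑ p ∈ Finset.univ.filter (fun p : Fin (m - 1) => p < k), (r p : ℕ) := by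
  rw [Finset.sum_range_succ', contractionWord, BlockMark.order, add_zero]
  refine Eq.symm (Finset.sum_bij (fun p _ => (p : ℕ)) (fun p hp => ?_)
    (fun p _ p' _ h => Fin.ext h) (fun j hj => ?_) ?_)
  · simpa using hp
  · have hj := Finset.mem_range.1 hj
    exact ⟨⟨j, by omega⟩, by simpa using hj, rfl⟩
  · exact fun p _ => (hr p).symm

lemma memD16_iff (hq : 2 ≤ q) (hqe : q % 2 = 0) (hm : 0 < m) :
    memD16 q m r ↔ IsBalanced m (contractionWord q r) ∧
      ∀ p : Fin (m - 1), (contractionWord q r (p + 1)).order q = r p := by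
  have horder : (∀ p, (r p : ℕ) = 0 ∨ (r p : ℕ) = q / 2 ∨ (r p : ℕ) = q) ↔
      ∀ p : Fin (m - 1), (contractionWord q r (p + 1)).order q = r p := by
    refine forall_congr' fun p => ⟨fun h => ?_, fun h => h ▸ BlockMark.order_mem _⟩
    rw [contractionWord_succ, BlockMark.order_ofOrder h]
  rw [memD16, horder]
  refine and_congr_left fun hr => ?_
  have hsum {k : ℕ} := sum_range_order_contractionWord hr (k := k)
  have htotal : ∑ j ∈ Finset.range m, (contractionWord q r j).order q = ∑ p, (r p : ℕ) := by
    have := hsum le_rfl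
    rwa [Nat.sub_add_cancel hm, Finset.filter_true_of_mem fun p _ => p.2] at this
  rw [isBalanced_iff_sum_order hq hqe contractionWord_of_le, memB16, memA16, htotal]
  refine and_congr_left fun _ => ⟨fun h k hk => ?_, fun h p => ?_⟩
  · cases k with
    | zero => simp [contractionWord, BlockMark.order]
    | succ k =>
      rw [hsum (by omega), hr ⟨k, by omega⟩]
      exact h ⟨k, by omega⟩
  · have := h (p + 1) (by omega)
    rwa [hsum p.2.le, hr] at this

lemma eq_of_contractionWord_eq (hq : 2 ≤ q) (hqe : q % 2 = 0) (hm : 0 < m) (hr : memD16 q m r)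
    (hr' : memD16 q m r') (h : contractionWord q r = contractionWord q r') : r = r' := by
  funext p
  rw [Fin.ext_iff, ← ((memD16_iff hq hqe hm).1 hr).2, ← ((memD16_iff hq hqe hm).1 hr').2, h]

lemma IsBalanced.exists_contractionWord_eq (hq : 2 ≤ q) (hqe : q % 2 = 0) (hm : 0 < m)
    (hw : IsBalanced m w) :
    ∃ r : Fin (m - 1) → Fin (q + 1), memD16 q m r ∧ contractionWord q r = w := by
  let r (p : Fin (m - 1)) : Fin (q + 1) :=
    ⟨(w (p + 1)).order q, Nat.lt_succ_iff.2 (w (p + 1)).order_le⟩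
  have hr : contractionWord q r = w := by
    funext k
    cases k with
    | zero => exact (by_contra fun h => hw.openStack_ne_nil 0 hm (Ne.symm h) rfl)
    | succ k =>
      rcases lt_or_ge k (m - 1) with hk | hk
      · exact (contractionWord_succ ⟨k, hk⟩).trans (BlockMark.ofOrder_order hq _)
      · rw [contractionWord_of_le _ (by omega), hw.eq_opening _ (by omega)]
  refine ⟨r, (memD16_iff hq hqe hm).2 ⟨hr ▸ hw, fun p => ?_⟩, hr⟩
  rw [hr]

/-- The limiting factor contributed by position `k`, whose function has index `c k`: the function
must have the same index as the one that opened the block, and closing the block of index `i`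
contributes `lam i`. -/
def markWeight {ι M : Type*} [DecidableEq ι] [Zero M] [One M] (lam : ι → M) (c : ℕ → ι)
    (w : ℕ → BlockMark) (k : ℕ) : M :=
  if c (blockLabel w k) = c k then if w k = closing then lam (c k) else 1 else 0

lemma IsBalanced.prod_markWeight {M : Type*} [CommSemiring M] (hw : IsBalanced m w) (lam : ℕ → M)
    (c : ℕ → ℕ) [Decidable (IsNCge2le m (fun x => c x) (fibers m (blockLabel w)))] :
    ∏ k ∈ Finset.range m, markWeight lam c w k =
      if IsNCge2le m (fun x => c x) (fibers m (blockLabel w)) then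
        ∏ B ∈ fibers m (blockLabel w), lam (B.sup fun x => c x) else 0 := by
  have hiff : IsNCge2le m (fun x => c x) (fibers m (blockLabel w)) ↔
      ∀ k ∈ Finset.range m, c (blockLabel w k) = c k := by
    rw [hw.isNoncrossingLabelling.isNCge2le_fibers_iff]
    refine ⟨fun h k hk => ?_, fun h x y hxy => ?_⟩
    · have hk := Finset.mem_range.1 hk
      exact h ⟨_, (hw.blockLabel_le k).trans_lt hk⟩ ⟨k, hk⟩ (hw.isNoncrossingLabelling.idem k)
    · rw [← h x (Finset.mem_range.2 x.2), hxy, h y (Finset.mem_range.2 y.2)]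
  simp only [markWeight]
  split_ifs with h
  · rw [hw.prod_fibers (hw.isNoncrossingLabelling.isNCge2le_fibers_iff.1 h) lam,
      Finset.prod_range]
    exact Finset.prod_congr rfl fun x _ => if_pos (hiff.1 h x (Finset.mem_range.2 x.2))
  · rw [hiff] at h
    push Not at h
    obtain ⟨k, hk, hne⟩ := h
    exact Finset.prod_eq_zero hk (if_neg hne)

open scoped Classical in
theorem sum_memD16_prod_markWeight {M : Type*} [CommSemiring M] (hq : 2 ≤ q) (hqe : q % 2 = 0)
    (hm : 0 < m) (lam : ℕ → M) (c : ℕ → ℕ) :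
    ∑ r : Fin (m - 1) → Fin (q + 1) with memD16 q m r,
        ∏ k ∈ Finset.range m, markWeight lam c (contractionWord q r) k =
      ∑ P : Finset (Finset (Fin m)) with IsNCge2le m (fun x => c x) P,
        ∏ B ∈ P, lam (B.sup fun x => c x) := by
  have hbal {r} (hr : memD16 q m r) := ((memD16_iff hq hqe hm).1 hr).1
  rw [Finset.sum_congr rfl fun r hr =>
    (hbal (Finset.mem_filter.1 hr).2).prod_markWeight lam c, ← Finset.sum_filter]
  refine Finset.sum_bij (fun r _ => fibers m (blockLabel (contractionWord q r)))
    (fun r hr => ?_) (fun r hr r' hr' h => ?_) (fun P hP => ?_) fun _ _ => rfl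
  · simpa using (Finset.mem_filter.1 hr).2
  · simp only [Finset.mem_filter, Finset.mem_univ, true_and] at hr hr'
    have hlabel := (hbal hr.1).isNoncrossingLabelling.eq_of_fibers_eq
      (hbal hr'.1).isNoncrossingLabelling h
    refine eq_of_contractionWord_eq hq hqe hm hr.1 hr'.1 ?_
    rw [← (hbal hr.1).markOf_blockLabel, hlabel, (hbal hr'.1).markOf_blockLabel]
  · have hP := (Finset.mem_filter.1 hP).2
    obtain ⟨b, hb, rfl⟩ := hP.exists_isNoncrossingLabelling
    obtain ⟨r, hr, hrb⟩ := hb.isBalanced_markOf.exists_contractionWord_eq hq hqe hm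
    have hfib : fibers m (blockLabel (contractionWord q r)) = fibers m b := by
      rw [hrb, hb.blockLabel_markOf]
    exact ⟨r, by simpa [hr, hfib] using hP, hfib⟩

end Orders

section KernelContraction

variable {X Y S 𝕜 E : Type*} [MeasurableSpace X] [MeasurableSpace Y] [MeasurableSpace S]
  [RCLike 𝕜] [NormedAddCommGroup E] {μ : Measure X} {ν : Measure Y} {τ : Measure S}

lemma eLpNorm_two_pow_two (f : X → E) : eLpNorm f 2 μ ^ 2 = ∫⁻ x, ‖f x‖ₑ ^ 2 ∂μ := by
  simpa using eLpNorm_nnreal_pow_eq_lintegral (μ := μ) (f := f) (p := 2) two_ne_zero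

lemma enorm_integral_mul_le {f g : S → 𝕜} (hf : AEStronglyMeasurable f τ)
    (hg : AEStronglyMeasurable g τ) :
    ‖∫ s, f s * g s ∂τ‖ₑ ≤ eLpNorm f 2 τ * eLpNorm g 2 τ :=
  calc ‖∫ s, f s * g s ∂τ‖ₑ ≤ ∫⁻ s, ‖(f • g) s‖ₑ ∂τ := enorm_integral_le_lintegral_enorm _
    _ = eLpNorm (f • g) 1 τ := eLpNorm_one_eq_lintegral_enorm.symm
    _ ≤ eLpNorm f 2 τ * eLpNorm g 2 τ := eLpNorm_smul_le_mul_eLpNorm hg hf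

lemma eLpNorm_mul_prod [SFinite ν] {f : X → 𝕜} {g : Y → 𝕜} (hf : AEStronglyMeasurable f μ)
    (hg : AEStronglyMeasurable g ν) :
    eLpNorm (fun z : X × Y => f z.1 * g z.2) 2 (μ.prod ν) = eLpNorm f 2 μ * eLpNorm g 2 ν := by
  refine (ENNReal.pow_right_strictMono two_ne_zero).injective ?_
  simp only [mul_pow, eLpNorm_two_pow_two, enorm_mul]
  exact lintegral_prod_mul (hf.enorm.pow_const 2) (hg.enorm.pow_const 2)

variable [SFinite τ]

lemma ae_memLp_two_prodMk {f : X × S → E} (hf : MemLp f 2 (μ.prod τ)) :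
    ∀ᵐ x ∂μ, MemLp (fun s => f (x, s)) 2 τ := by
  have hfm : AEMeasurable (fun z => ‖f z‖ₑ ^ 2) (μ.prod τ) := hf.1.enorm.pow_const 2
  have hfin : ∫⁻ x, eLpNorm (fun s => f (x, s)) 2 τ ^ 2 ∂μ ≠ ⊤ := by
    simp only [eLpNorm_two_pow_two]
    rw [← lintegral_prod _ hfm, ← eLpNorm_two_pow_two]
    exact ENNReal.pow_ne_top hf.2.ne
  have hmeas : AEMeasurable (fun x => eLpNorm (fun s => f (x, s)) 2 τ ^ 2) μ := by
    simp only [eLpNorm_two_pow_two]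
    exact hfm.lintegral_prod_right'
  filter_upwards [hf.1.prodMk_left, ae_lt_top' hmeas hfin] with x hx hlt
  exact ⟨hx, (ENNReal.pow_lt_top_iff.1 hlt).resolve_right two_ne_zero⟩

/-- The contraction of two kernels along their common second variable: the coordinate-free form
of an arc contraction. -/
def kernelContraction (τ : Measure S) (f : X × S → 𝕜) (g : Y × S → 𝕜) (z : X × Y) : 𝕜 :=
  ∫ s, f (z.1, s) * g (z.2, s) ∂τ

variable {f f₁ f₂ : X × S → 𝕜} {g : Y × S → 𝕜}

lemma kernelContraction_sub_ae (hf₁ : MemLp f₁ 2 (μ.prod τ)) (hf₂ : MemLp f₂ 2 (μ.prod τ))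
    (hg : MemLp g 2 (ν.prod τ)) :
    kernelContraction τ (f₁ - f₂) g =ᵐ[μ.prod ν]
      kernelContraction τ f₁ g - kernelContraction τ f₂ g := by
  filter_upwards [Measure.quasiMeasurePreserving_fst.ae (ae_memLp_two_prodMk hf₁),
    Measure.quasiMeasurePreserving_fst.ae (ae_memLp_two_prodMk hf₂),
    Measure.quasiMeasurePreserving_snd.ae (ae_memLp_two_prodMk hg)] with z h₁ h₂ h
  simp only [kernelContraction, Pi.sub_apply, sub_mul]
  exact integral_sub (h₁.integrable_mul h) (h₂.integrable_mul h)

variable [SFinite ν]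

lemma eLpNorm_kernelContraction_le (hf : AEStronglyMeasurable f (μ.prod τ))
    (hg : AEStronglyMeasurable g (ν.prod τ)) :
    eLpNorm (kernelContraction τ f g) 2 (μ.prod ν) ≤
      eLpNorm f 2 (μ.prod τ) * eLpNorm g 2 (ν.prod τ) := by
  have hfm : AEMeasurable (fun z => ‖f z‖ₑ ^ 2) (μ.prod τ) := hf.enorm.pow_const 2
  have hgm : AEMeasurable (fun z => ‖g z‖ₑ ^ 2) (ν.prod τ) := hg.enorm.pow_const 2
  rw [← ENNReal.pow_le_pow_left_iff two_ne_zero, mul_pow, eLpNorm_two_pow_two,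
    eLpNorm_two_pow_two, eLpNorm_two_pow_two, lintegral_prod _ hfm, lintegral_prod _ hgm,
    ← lintegral_prod_mul hfm.lintegral_prod_right' hgm.lintegral_prod_right']
  refine lintegral_mono_ae ?_
  filter_upwards [Measure.quasiMeasurePreserving_fst.ae hf.prodMk_left,
    Measure.quasiMeasurePreserving_snd.ae hg.prodMk_left] with z hfz hgz
  rw [← eLpNorm_two_pow_two, ← eLpNorm_two_pow_two, ← mul_pow]
  exact pow_le_pow_left' (enorm_integral_mul_le hfz hgz) 2

variable [SFinite μ]

lemma aestronglyMeasurable_kernelContraction (hf : AEStronglyMeasurable f (μ.prod τ))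
    (hg : AEStronglyMeasurable g (ν.prod τ)) :
    AEStronglyMeasurable (kernelContraction τ f g) (μ.prod ν) := by
  have hfst : Measure.QuasiMeasurePreserving (Prod.map Prod.fst id : (X × Y) × S → X × S)
      ((μ.prod ν).prod τ) (μ.prod τ) :=
    QuasiMeasurePreserving.prodMap Measure.quasiMeasurePreserving_fst (.id τ)
  have hsnd : Measure.QuasiMeasurePreserving (Prod.map Prod.snd id : (X × Y) × S → Y × S)
      ((μ.prod ν).prod τ) (ν.prod τ) :=
    QuasiMeasurePreserving.prodMap Measure.quasiMeasurePreserving_snd (.id τ)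
  exact ((hf.comp_quasiMeasurePreserving hfst).mul
    (hg.comp_quasiMeasurePreserving hsnd)).integral_prod_right'

end KernelContraction

section Orthant

variable {a b d n : ℕ}

lemma μpos_eq_pi (n : ℕ) :
    μpos n = Measure.pi fun _ : Fin n => (volume : Measure ℝ).restrict (Set.Ici 0) := by
  have : posOrthant n = Set.univ.pi fun _ : Fin n => Set.Ici (0 : ℝ) := by
    ext x
    simp [posOrthant, Pi.le_def]
  rw [μpos, this, volume_pi, Measure.restrict_pi_pi]

instance (n : ℕ) : SigmaFinite (μpos n) := by
  rw [μpos_eq_pi]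
  infer_instance

lemma μpos_zero : μpos 0 = Measure.dirac fun _ => 0 := by
  rw [μpos_eq_pi]
  exact Measure.pi_of_empty _ _

lemma pad_of_lt (t : Fin n → ℝ) {i : ℕ} (h : i < n) : pad t i = t ⟨i, h⟩ :=
  dif_pos h

lemma memLp_reindex (h : a = b) {F : (Fin a → ℝ) → ℂ} (hF : MemLp F 2 (μpos a)) :
    MemLp (reindex h F) 2 (μpos b) := by
  subst h
  exact hF

lemma eLpNorm_reindex (h : a = b) (F : (Fin a → ℝ) → ℂ) :
    eLpNorm (reindex h F) 2 (μpos b) = eLpNorm F 2 (μpos a) := by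
  subst h
  rfl

/-- Concatenation of coordinates, as a measurable equivalence. -/
def joinEquiv (h : a + b = d) : ((Fin a → ℝ) × (Fin b → ℝ)) ≃ᵐ (Fin d → ℝ) :=
  (MeasurableEquiv.sumPiEquivProdPi fun _ : Fin a ⊕ Fin b => ℝ).symm.trans
    (MeasurableEquiv.piCongrLeft (fun _ => ℝ) (finSumFinEquiv.trans (finCongr h)))

lemma pad_joinEquiv (h : a + b = d) (z : (Fin a → ℝ) × (Fin b → ℝ)) (i : ℕ) :
    pad (joinEquiv h z) i = if i < a then pad z.1 i else pad z.2 (i - a) := by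
  have happly (k : Fin a ⊕ Fin b) :
      joinEquiv h z (finCongr h (finSumFinEquiv k)) = Sum.elim z.1 z.2 k := by
    rw [joinEquiv, MeasurableEquiv.trans_apply]
    exact (Equiv.piCongrLeft_apply_apply (fun _ => ℝ) (finSumFinEquiv.trans (finCongr h)) _ k).trans
      (by cases k <;> rfl)
  split_ifs with hi
  · rw [pad_of_lt _ (by omega), pad_of_lt _ hi]
    exact happly (.inl ⟨i, hi⟩)
  · by_cases hib : i - a < b
    · rw [pad_of_lt _ (by omega : i < d), pad_of_lt _ hib, ← Sum.elim_inr z.1 z.2, ← happly]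
      exact congrArg _ (Fin.ext (by simp; omega))
    · rw [pad, dif_neg (by omega), pad, dif_neg hib]

lemma measurePreserving_joinEquiv (h : a + b = d) :
    MeasurePreserving (joinEquiv h) ((μpos a).prod (μpos b)) (μpos d) := by
  simp only [μpos_eq_pi]
  exact (measurePreserving_piCongrLeft (fun _ => (volume : Measure ℝ).restrict (Set.Ici 0)) _).comp
    (measurePreserving_sumPiEquivProdPi_symm fun _ => (volume : Measure ℝ).restrict (Set.Ici 0))

/-- Reversal of the order of the coordinates, as a measurable equivalence. -/
def revEquiv (n : ℕ) : (Fin n → ℝ) ≃ᵐ (Fin n → ℝ) :=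
  MeasurableEquiv.piCongrLeft (fun _ => ℝ) Fin.revPerm

lemma revEquiv_apply (t : Fin n → ℝ) (i : Fin n) : revEquiv n t i = t i.rev := by
  simpa [revEquiv, MeasurableEquiv.coe_piCongrLeft] using
    Equiv.piCongrLeft_apply_apply (fun _ => ℝ) Fin.revPerm t i.rev

lemma measurePreserving_revEquiv (n : ℕ) :
    MeasurePreserving (revEquiv n) (μpos n) (μpos n) := by
  rw [μpos_eq_pi]
  exact measurePreserving_piCongrLeft (fun _ => (volume : Measure ℝ).restrict (Set.Ici 0))
    Fin.revPerm

end Orthant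

section Arc

variable {a b c d q r : ℕ} {F G : (Fin d → ℝ) → ℂ} {g : (Fin q → ℝ) → ℂ}

lemma arc_comp_joinEquiv (hd : r ≤ d) (hq : r ≤ q) (F : (Fin d → ℝ) → ℂ) (g : (Fin q → ℝ) → ℂ) :
    arc d q r F g ∘ joinEquiv (by omega : d - r + (q - r) = d + q - 2 * r) =
      kernelContraction (μpos r)
        (F ∘ joinEquiv (by omega : d - r + r = d) ∘ Prod.map id (revEquiv r))
        (g ∘ joinEquiv (by omega : r + (q - r) = q) ∘ Prod.swap) := by
  funext z
  refine integral_congr_ae (.of_forall fun s => ?_)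
  simp only [arcKer, Function.comp_apply, pad_joinEquiv]
  congr 2 <;> funext j
  · have := pad_joinEquiv (by omega : d - r + r = d) (z.1, revEquiv r s) j
    rw [pad_of_lt _ j.2] at this
    simp only [Prod.map, id, this]
    split_ifs with hj
    · rfl
    · have hj' : d - 1 - j < r := by omega
      rw [pad_of_lt s hj', pad_of_lt _ (by omega), revEquiv_apply]
      exact congrArg s (Fin.ext (by simp; omega))
  · have := pad_joinEquiv (by omega : r + (q - r) = q) (s, z.2) j
    rw [pad_of_lt _ j.2] at this
    simp only [Prod.swap, this]
    split_ifs with hj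
    · rfl
    · omega
    · rw [show d + (j : ℕ) - 2 * r - (d - r) = j - r by omega]

lemma measurePreserving_joinEquiv_rev (h : a + b = d) :
    MeasurePreserving (joinEquiv h ∘ Prod.map id (revEquiv b)) ((μpos a).prod (μpos b)) (μpos d) :=
  (measurePreserving_joinEquiv h).comp <|
    (MeasurePreserving.id _).prod (measurePreserving_revEquiv b)

lemma measurePreserving_joinEquiv_swap (h : a + b = d) :
    MeasurePreserving (joinEquiv h ∘ Prod.swap) ((μpos b).prod (μpos a)) (μpos d) :=
  (measurePreserving_joinEquiv h).comp Measure.measurePreserving_swap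

lemma aestronglyMeasurable_arc (hd : r ≤ d) (hq : r ≤ q) (hF : AEStronglyMeasurable F (μpos d))
    (hg : AEStronglyMeasurable g (μpos q)) :
    AEStronglyMeasurable (arc d q r F g) (μpos (d + q - 2 * r)) := by
  rw [← (measurePreserving_joinEquiv (by omega : d - r + (q - r) = _)).aestronglyMeasurable_comp_iff
    (joinEquiv _).measurableEmbedding, arc_comp_joinEquiv hd hq]
  exact aestronglyMeasurable_kernelContraction
    (hF.comp_measurePreserving (measurePreserving_joinEquiv_rev _))
    (hg.comp_measurePreserving (measurePreserving_joinEquiv_swap _))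

lemma eLpNorm_arc_le (hd : r ≤ d) (hq : r ≤ q) (hF : AEStronglyMeasurable F (μpos d))
    (hg : AEStronglyMeasurable g (μpos q)) :
    eLpNorm (arc d q r F g) 2 (μpos (d + q - 2 * r)) ≤
      eLpNorm F 2 (μpos d) * eLpNorm g 2 (μpos q) := by
  have hF' := measurePreserving_joinEquiv_rev (by omega : d - r + r = d)
  have hg' := measurePreserving_joinEquiv_swap (by omega : r + (q - r) = q)
  rw [← eLpNorm_comp_measurePreserving (aestronglyMeasurable_arc hd hq hF hg)
    (measurePreserving_joinEquiv (by omega : d - r + (q - r) = _)), arc_comp_joinEquiv hd hq,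
    ← eLpNorm_comp_measurePreserving hF hF', ← eLpNorm_comp_measurePreserving hg hg']
  exact eLpNorm_kernelContraction_le (hF.comp_measurePreserving hF') (hg.comp_measurePreserving hg')

lemma memLp_arc (hd : r ≤ d) (hq : r ≤ q) (hF : MemLp F 2 (μpos d)) (hg : MemLp g 2 (μpos q)) :
    MemLp (arc d q r F g) 2 (μpos (d + q - 2 * r)) :=
  ⟨aestronglyMeasurable_arc hd hq hF.1 hg.1,
    (eLpNorm_arc_le hd hq hF.1 hg.1).trans_lt (ENNReal.mul_lt_top hF.2 hg.2)⟩

lemma arc_sub_ae (hd : r ≤ d) (hq : r ≤ q) (hF : MemLp F 2 (μpos d)) (hG : MemLp G 2 (μpos d))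
    (hg : MemLp g 2 (μpos q)) :
    arc d q r (F - G) g =ᵐ[μpos (d + q - 2 * r)] arc d q r F g - arc d q r G g := by
  let e := joinEquiv (by omega : d - r + (q - r) = d + q - 2 * r)
  have hF' := measurePreserving_joinEquiv_rev (by omega : d - r + r = d)
  have hg' := measurePreserving_joinEquiv_swap (by omega : r + (q - r) = q)
  have hcomp : arc d q r (F - G) g ∘ e =ᵐ[(μpos (d - r)).prod (μpos (q - r))]
      (arc d q r F g - arc d q r G g) ∘ e := by
    rw [Pi.sub_comp, arc_comp_joinEquiv hd hq, arc_comp_joinEquiv hd hq, arc_comp_joinEquiv hd hq]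
    exact kernelContraction_sub_ae (hF.comp_measurePreserving hF') (hG.comp_measurePreserving hF')
      (hg.comp_measurePreserving hg')
  have hpull := (measurePreserving_joinEquiv (by omega : d - r + (q - r) = _)).symm e
    |>.quasiMeasurePreserving.ae_eq_comp hcomp
  filter_upwards [hpull] with t ht
  simpa using ht

lemma eLpNorm_arc_sub_arc_le (hd : r ≤ d) (hq : r ≤ q) (hF : MemLp F 2 (μpos d))
    (hG : MemLp G 2 (μpos d)) (hg : MemLp g 2 (μpos q)) :
    eLpNorm (arc d q r F g - arc d q r G g) 2 (μpos (d + q - 2 * r)) ≤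
      eLpNorm (F - G) 2 (μpos d) * eLpNorm g 2 (μpos q) := by
  rw [← eLpNorm_congr_ae (arc_sub_ae hd hq hF hG hg)]
  exact eLpNorm_arc_le hd hq (hF.1.sub hG.1) hg.1

lemma arc_smul (w : ℂ) (F : (Fin d → ℝ) → ℂ) (g : (Fin q → ℝ) → ℂ) :
    arc d q r (w • F) g = w • arc d q r F g := by
  funext t
  simp only [arc, arcKer, Pi.smul_apply, smul_eq_mul, mul_assoc]
  exact integral_const_mul w _

lemma arc_self (h g : (Fin q → ℝ) → ℂ) (hg : IsSymmFn q g) (t : Fin (q + q - 2 * q) → ℝ) :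
    arc q q q h g t = L2inner q h g := by
  rw [L2inner, ← (measurePreserving_revEquiv q).integral_comp (revEquiv q).measurableEmbedding]
  refine integral_congr_ae ?_
  filter_upwards [(measurePreserving_revEquiv q).quasiMeasurePreserving.ae hg] with s hs
  rw [hs, adjF, Complex.conj_conj, arcKer]
  congr 2 <;> funext j
  · rw [if_neg (by omega), pad_of_lt _ (by omega), revEquiv_apply]
    exact congrArg s (Fin.ext (by simp; omega))
  · rw [if_pos j.2, pad_of_lt _ j.2, revEquiv_apply, Fin.rev_rev]

/-- The tensor product `F ⊗ G`, as a function of `d` variables. It stands for a function of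
`a + b` variables; keeping `d` free avoids transporting along equalities of dimensions. -/
def tensorProd (F : (Fin a → ℝ) → ℂ) (G : (Fin b → ℝ) → ℂ) (t : Fin d → ℝ) : ℂ :=
  F (fun i => pad t i) * G fun j => pad t (a + j)

lemma tensorProd_comp_joinEquiv (h : a + b = d) (F : (Fin a → ℝ) → ℂ) (G : (Fin b → ℝ) → ℂ) :
    tensorProd F G ∘ joinEquiv h = fun z => F z.1 * G z.2 := by
  funext z
  simp [tensorProd, pad_joinEquiv, pad_of_lt]

lemma aestronglyMeasurable_tensorProd (h : a + b = d) {F : (Fin a → ℝ) → ℂ} {G : (Fin b → ℝ) → ℂ}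
    (hF : AEStronglyMeasurable F (μpos a)) (hG : AEStronglyMeasurable G (μpos b)) :
    AEStronglyMeasurable (tensorProd F G) (μpos d) := by
  rw [← (measurePreserving_joinEquiv h).aestronglyMeasurable_comp_iff
    (joinEquiv h).measurableEmbedding, tensorProd_comp_joinEquiv]
  exact hF.comp_fst.mul hG.comp_snd

lemma eLpNorm_tensorProd (h : a + b = d) {F : (Fin a → ℝ) → ℂ} {G : (Fin b → ℝ) → ℂ}
    (hF : AEStronglyMeasurable F (μpos a)) (hG : AEStronglyMeasurable G (μpos b)) :
    eLpNorm (tensorProd F G) 2 (μpos d) = eLpNorm F 2 (μpos a) * eLpNorm G 2 (μpos b) := by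
  rw [← eLpNorm_comp_measurePreserving (aestronglyMeasurable_tensorProd h hF hG)
    (measurePreserving_joinEquiv h), tensorProd_comp_joinEquiv, eLpNorm_mul_prod hF hG]

lemma tensorProd_reindex (h : b = c) (F : (Fin a → ℝ) → ℂ) (G : (Fin b → ℝ) → ℂ) :
    tensorProd (d := d) F (reindex h G) = tensorProd F G := by
  subst h
  rfl

lemma arc_zero (F : (Fin d → ℝ) → ℂ) (g : (Fin q → ℝ) → ℂ) :
    arc d q 0 F g = tensorProd F g := by
  funext t
  change ∫ s, arcKer d q 0 F g t s ∂(μpos 0) = _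
  rw [μpos_zero, integral_dirac]
  simp [arcKer, tensorProd]

lemma arc_tensorProd (h : a + b = d) (hb : r ≤ b) (hq : r ≤ q) (F : (Fin a → ℝ) → ℂ)
    (G : (Fin b → ℝ) → ℂ) (g : (Fin q → ℝ) → ℂ) :
    arc d q r (tensorProd F G) g = tensorProd F (arc b q r G g) := by
  subst h
  funext t
  simp only [arc, tensorProd]
  rw [← integral_const_mul]
  refine integral_congr_ae (.of_forall fun s => ?_)
  simp only [arcKer, tensorProd, mul_assoc]
  congr 2
  · funext i
    rw [pad_of_lt _ (by omega : (i : ℕ) < a + b), if_pos (show (i : ℕ) < a + b - r by omega)]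
  · congr 1
    funext i
    rw [pad_of_lt _ (by omega : a + (i : ℕ) < a + b)]
    dsimp only
    by_cases hi : (i : ℕ) < b - r
    · rw [if_pos hi, if_pos (by omega), pad_of_lt _ (by omega : (i : ℕ) < b + q - 2 * r)]
    · rw [if_neg hi, if_neg (by omega), show a + b - 1 - (a + (i : ℕ)) = b - 1 - i by omega]
  · congr 1
    funext i
    split_ifs with hi
    · rfl
    · rw [pad_of_lt _ (by omega : b + (i : ℕ) - 2 * r < b + q - 2 * r)]
      dsimp only
      rw [show a + (b + (i : ℕ) - 2 * r) = a + b + i - 2 * r by omega]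

end Arc

section StackTensor

variable {α ι : Type*} {q d r : ℕ} {l : Filter α}

lemma eLpNorm_eq_ofReal_L2norm {F : (Fin d → ℝ) → ℂ} (hF : MemLp F 2 (μpos d)) :
    eLpNorm F 2 (μpos d) = ENNReal.ofReal (L2norm d F) := by
  rw [hF.eLpNorm_eq_integral_rpow_norm two_ne_zero ENNReal.ofNat_ne_top, L2norm,
    Real.sqrt_eq_rpow]
  norm_num

lemma L2inner_self (F : (Fin d → ℝ) → ℂ) : L2inner d F F = (L2norm d F ^ 2 : ℝ) := by
  rw [L2norm, Real.sq_sqrt (integral_nonneg fun x => by positivity), ← integral_complex_ofReal,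
    L2inner]
  simp only [Complex.mul_conj, Complex.normSq_eq_norm_sq]

lemma tendsto_eLpNorm_of_tendsto_L2inner {F : α → (Fin d → ℝ) → ℂ} {z : ℂ}
    (hF : ∀ n, MemLp (F n) 2 (μpos d)) (h : Tendsto (fun n => L2inner d (F n) (F n)) l (𝓝 z)) :
    Tendsto (fun n => eLpNorm (F n) 2 (μpos d)) l (𝓝 ((√z.re).toNNReal : ENNReal)) := by
  have hsqrt := (Real.continuous_sqrt.comp Complex.continuous_re).continuousAt.tendsto.comp h
  refine (ENNReal.tendsto_ofReal hsqrt).congr fun n => ?_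
  simp only [Function.comp_apply, L2inner_self, Complex.ofReal_re]
  have hnonneg : 0 ≤ L2norm d (F n) := Real.sqrt_nonneg _
  rw [Real.sqrt_sq hnonneg, eLpNorm_eq_ofReal_L2norm (hF n)]

lemma tendsto_eLpNorm_arc_sub {F G : α → (Fin d → ℝ) → ℂ} {g : α → (Fin q → ℝ) → ℂ}
    {T : α → (Fin (d + q - 2 * r) → ℝ) → ℂ} {b : NNReal} (hd : r ≤ d) (hq : r ≤ q)
    (hF : ∀ n, MemLp (F n) 2 (μpos d)) (hG : ∀ n, MemLp (G n) 2 (μpos d))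
    (hg : ∀ n, MemLp (g n) 2 (μpos q))
    (hT : ∀ n, AEStronglyMeasurable (T n) (μpos (d + q - 2 * r)))
    (hb : Tendsto (fun n => eLpNorm (g n) 2 (μpos q)) l (𝓝 b))
    (hFG : Tendsto (fun n => eLpNorm (F n - G n) 2 (μpos d)) l (𝓝 0))
    (hGT : Tendsto (fun n => eLpNorm (arc d q r (G n) (g n) - T n) 2 (μpos (d + q - 2 * r))) l
      (𝓝 0)) :
    Tendsto (fun n => eLpNorm (arc d q r (F n) (g n) - T n) 2 (μpos (d + q - 2 * r))) l (𝓝 0) := by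
  have hbound : Tendsto (fun n => eLpNorm (F n - G n) 2 (μpos d) * eLpNorm (g n) 2 (μpos q) +
      eLpNorm (arc d q r (G n) (g n) - T n) 2 (μpos (d + q - 2 * r))) l (𝓝 0) := by
    simpa using (ENNReal.Tendsto.mul hFG (.inr ENNReal.coe_ne_top) hb
      (.inr ENNReal.zero_ne_top)).add hGT
  refine tendsto_of_tendsto_of_tendsto_of_le_of_le tendsto_const_nhds hbound
    (fun n => zero_le) fun n => ?_
  have hFm := aestronglyMeasurable_arc hd hq (hF n).1 (hg n).1
  have hGm := aestronglyMeasurable_arc hd hq (hG n).1 (hg n).1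
  rw [← sub_add_sub_cancel _ (arc d q r (G n) (g n))]
  refine (eLpNorm_add_le (hFm.sub hGm) (hGm.sub (hT n)) one_le_two).trans ?_
  gcongr
  exact eLpNorm_arc_sub_arc_le hd hq (hF n) (hG n) (hg n)

/-- The tensor product of the functions `f i`, where `i` runs through a stack whose top is the head
of the list: the last `q` variables belong to the top. As in `tensorProd`, the number `d` of
variables is free and stands for `q` times the height of the stack. -/
def stackTensor (f : ι → (Fin q → ℝ) → ℂ) : List ι → {d : ℕ} → (Fin d → ℝ) → ℂ
  | [], _ => 1
  | i :: S, _ => tensorProd (a := q * S.length) (stackTensor f S) (f i)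

lemma stackTensor_pad (f : ι → (Fin q → ℝ) → ℂ) {S : List ι} (hd : d = q * S.length)
    (t : Fin d → ℝ) :
    stackTensor f S (fun i : Fin (q * S.length) => pad t i) = stackTensor f S t := by
  subst hd
  simp only [pad_of_lt _ (Fin.is_lt _), Fin.eta]

lemma memLp_stackTensor {f : ι → (Fin q → ℝ) → ℂ} (hf : ∀ i, MemLp (f i) 2 (μpos q)) :
    ∀ {S : List ι} {d : ℕ}, d = q * S.length → MemLp (stackTensor f S) 2 (μpos d)
  | [], _, rfl => by
    rw [List.length_nil, mul_zero, μpos_zero]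
    exact memLp_const 1
  | i :: S, d, hd => by
    have hS := memLp_stackTensor hf (S := S) rfl
    have hd : q * S.length + q = d := by rw [hd, List.length_cons, mul_add, mul_one]
    refine ⟨aestronglyMeasurable_tensorProd hd hS.1 (hf i).1, ?_⟩
    rw [stackTensor, eLpNorm_tensorProd hd hS.1 (hf i).1]
    exact ENNReal.mul_lt_top hS.2 (hf i).2

lemma tendsto_eLpNorm_stackTensor {f : α → ι → (Fin q → ℝ) → ℂ}
    (hf : ∀ n i, MemLp (f n i) 2 (μpos q)) {b : ι → NNReal}
    (hb : ∀ i, Tendsto (fun n => eLpNorm (f n i) 2 (μpos q)) l (𝓝 (b i))) :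
    ∀ {S : List ι} {d : ℕ}, d = q * S.length →
      Tendsto (fun n => eLpNorm (stackTensor (f n) S) 2 (μpos d)) l (𝓝 ((S.map b).prod : NNReal))
  | [], _, rfl => by
    rw [List.length_nil, mul_zero, μpos_zero]
    simpa [eLpNorm_dirac, stackTensor] using tendsto_const_nhds
  | i :: S, d, hd => by
    have hS := tendsto_eLpNorm_stackTensor hf hb (S := S) rfl
    have hd : q * S.length + q = d := by rw [hd, List.length_cons, mul_add, mul_one]
    have hnorm n := eLpNorm_tensorProd hd (memLp_stackTensor (hf n) (S := S) rfl).1 (hf n i).1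
    simp only [stackTensor, hnorm, List.map_cons, List.prod_cons, mul_comm (b i), ENNReal.coe_mul]
    exact ENNReal.Tendsto.mul hS (.inr ENNReal.coe_ne_top) (hb i) (.inr ENNReal.coe_ne_top)

/-- `x n` is asymptotically, in the `L²` norm, equal to `w` times the tensor product of the
functions `f n i` for `i` in the stack `S`. -/
def IsAsympStackTensor (l : Filter α) (f : α → ι → (Fin q → ℝ) → ℂ) (w : ℂ) (S : List ι)
    (x : α → (d : ℕ) × ((Fin d → ℝ) → ℂ)) : Prop :=
  ∃ (d : ℕ) (F : α → (Fin d → ℝ) → ℂ), d = q * S.length ∧ (∀ n, x n = ⟨d, F n⟩) ∧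
    (∀ n, MemLp (F n) 2 (μpos d)) ∧
    Tendsto (fun n => eLpNorm (F n - w • stackTensor (f n) S) 2 (μpos d)) l (𝓝 0)

variable {f : α → ι → (Fin q → ℝ) → ℂ} {w w' : ℂ} {S S' : List ι} {i j : ι}
  {x : α → (d : ℕ) × ((Fin d → ℝ) → ℂ)}

lemma IsAsympStackTensor.tendsto_scalarOf (hx : IsAsympStackTensor l f w [] x) :
    Tendsto (fun n => scalarOf (x n)) l (𝓝 w) := by
  obtain ⟨d, F, hd, hxF, -, hlim⟩ := hx
  obtain rfl : d = 0 := by simpa using hd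
  rw [tendsto_iff_edist_tendsto_0]
  refine hlim.congr fun n => ?_
  rw [μpos_zero, eLpNorm_dirac _ _ two_ne_zero, edist_eq_enorm_sub, hxF n]
  simp [scalarOf, stackTensor]

lemma IsAsympStackTensor.contract (hf : ∀ n i, MemLp (f n i) 2 (μpos q)) {b : NNReal}
    (hb : Tendsto (fun n => eLpNorm (f n i) 2 (μpos q)) l (𝓝 b))
    (hx : IsAsympStackTensor l f w S x) (hr : r ≤ q * S.length) (hrq : r ≤ q)
    (hlen : q * S.length + q - 2 * r = q * S'.length)
    (h : Tendsto (fun n => eLpNorm (w • arc (q * S.length) q r (stackTensor (f n) S) (f n i) -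
      w' • stackTensor (f n) S') 2 (μpos (q * S.length + q - 2 * r))) l (𝓝 0)) :
    IsAsympStackTensor l f w' S' fun n => iterStep q (x n) (r, f n i) := by
  obtain ⟨d, F, rfl, hxF, hF, hlim⟩ := hx
  refine ⟨_, fun n => arc _ q r (F n) (f n i), hlen, fun n => by simp only [hxF]; rfl,
    fun n => memLp_arc hr hrq (hF n) (hf n i), ?_⟩
  refine tendsto_eLpNorm_arc_sub hr hrq hF
    (fun n => (memLp_stackTensor (hf n) rfl).const_smul w) (fun n => hf n i)
    (fun n => (memLp_stackTensor (hf n) hlen).1.const_smul w') hb hlim ?_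
  simpa only [arc_smul] using h

lemma IsAsympStackTensor.push (hf : ∀ n i, MemLp (f n i) 2 (μpos q)) {b : NNReal}
    (hb : Tendsto (fun n => eLpNorm (f n i) 2 (μpos q)) l (𝓝 b))
    (hx : IsAsympStackTensor l f w S x) :
    IsAsympStackTensor l f w (i :: S) fun n => iterStep q (x n) (0, f n i) := by
  refine hx.contract hf hb zero_le zero_le (by simp [mul_add]) ?_
  simp only [arc_zero, stackTensor, sub_self, eLpNorm_zero, tendsto_const_nhds]

lemma IsAsympStackTensor.replace_top (hf : ∀ n i, MemLp (f n i) 2 (μpos q))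
    {b : ι → NNReal} (hb : ∀ i, Tendsto (fun n => eLpNorm (f n i) 2 (μpos q)) l (𝓝 (b i)))
    (h : q + q - 2 * (q / 2) = q) {v : ℂ}
    (hhalf : Tendsto (fun n => eLpNorm (reindex h (arc q q (q / 2) (f n j) (f n i)) - v • f n j) 2
      (μpos q)) l (𝓝 0)) (hx : IsAsympStackTensor l f w (j :: S) x) :
    IsAsympStackTensor l f (w * v) (j :: S) fun n => iterStep q (x n) (q / 2, f n i) := by
  have hlen : q * (j :: S).length = q * S.length + q := by simp [mul_add]
  have hdim : q * S.length + q = q * (j :: S).length + q - 2 * (q / 2) := by omega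
  have hdiff n : w • arc (q * (j :: S).length) q (q / 2) (stackTensor (f n) (j :: S)) (f n i) -
      (w * v) • stackTensor (f n) (j :: S) = w • tensorProd (a := q * S.length)
        (stackTensor (f n) S) (reindex h (arc q q (q / 2) (f n j) (f n i)) - v • f n j) := by
    simp only [stackTensor]
    rw [arc_tensorProd hlen.symm (by omega) (by omega), ← tensorProd_reindex h]
    funext t
    simp only [tensorProd, Pi.sub_apply, Pi.smul_apply, smul_eq_mul]
    ring
  refine hx.contract hf (hb i) (by omega) (by omega) (hdim.symm.trans hlen.symm) ?_
  simp only [hdiff, eLpNorm_const_smul]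
  have hmeas n : AEStronglyMeasurable (reindex h (arc q q (q / 2) (f n j) (f n i)) - v • f n j)
      (μpos q) :=
    (memLp_reindex h (memLp_arc (by omega) (by omega) (hf n j) (hf n i))).1.sub
      ((hf n j).1.const_smul v)
  simp only [eLpNorm_tensorProd hdim (memLp_stackTensor (hf _) rfl).1 (hmeas _)]
  simpa using ENNReal.Tendsto.const_mul (ENNReal.Tendsto.mul (tendsto_eLpNorm_stackTensor hf hb rfl)
    (.inr ENNReal.zero_ne_top) hhalf (.inr ENNReal.coe_ne_top)) (.inr (enorm_ne_top (x := w)))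

lemma IsAsympStackTensor.pop (hf : ∀ n i, MemLp (f n i) 2 (μpos q))
    {b : ι → NNReal} (hb : ∀ i, Tendsto (fun n => eLpNorm (f n i) 2 (μpos q)) l (𝓝 (b i)))
    (hsym : ∀ n, IsSymmFn q (f n i)) {v : ℂ}
    (hinner : Tendsto (fun n => L2inner q (f n j) (f n i)) l (𝓝 v))
    (hx : IsAsympStackTensor l f w (j :: S) x) :
    IsAsympStackTensor l f (w * v) S fun n => iterStep q (x n) (q, f n i) := by
  have hlen : q * (j :: S).length = q * S.length + q := by simp [mul_add]
  have hdim : q * (j :: S).length + q - 2 * q = q * S.length := by omega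
  have hdiff n : w • arc (q * (j :: S).length) q q (stackTensor (f n) (j :: S)) (f n i) -
      (w * v) • stackTensor (f n) S =
        (w * (L2inner q (f n j) (f n i) - v)) • stackTensor (f n) S := by
    rw [stackTensor, arc_tensorProd hlen.symm le_rfl le_rfl]
    funext t
    simp only [tensorProd, Pi.sub_apply, Pi.smul_apply, smul_eq_mul, arc_self _ _ (hsym n),
      stackTensor_pad _ hdim]
    ring
  refine hx.contract hf (hb i) (by omega) le_rfl hdim ?_
  have hcoeff : Tendsto (fun n => ‖w * (L2inner q (f n j) (f n i) - v)‖ₑ) l (𝓝 0) := by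
    simpa using ((hinner.sub_const v).const_mul w).enorm
  simp only [hdiff, eLpNorm_const_smul]
  simpa using ENNReal.Tendsto.mul hcoeff (.inr ENNReal.coe_ne_top)
    (tendsto_eLpNorm_stackTensor hf hb hdim) (.inr ENNReal.zero_ne_top)

end StackTensor

section Limit

variable {α ι : Type*} [DecidableEq ι] {l : Filter α} {q m : ℕ}

/-- The family of kernels `f n i` behaves in the limit like the kernels of free centered Poisson
variables of rates `lam i`, as far as contractions of the orders `q / 2` and `q` can tell: besides
the trivial order `0`, these are the ones that occur in `D_m`. -/
structure IsAsympPoissonFamily (l : Filter α) (hqe : q % 2 = 0) (lam : ι → ℝ)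
    (f : α → ι → (Fin q → ℝ) → ℂ) : Prop where
  memLp : ∀ n i, MemLp (f n i) 2 (μpos q)
  isSymmFn : ∀ n i, IsSymmFn q (f n i)
  tendsto_L2inner : ∀ i j, Tendsto (fun n => L2inner q (f n i) (f n j)) l
    (𝓝 (if i = j then (lam i : ℂ) else 0))
  tendsto_arc_self : ∀ i, Tendsto (fun n => L2norm q fun t =>
    reindex (show q + q - 2 * (q / 2) = q by omega) (arc q q (q / 2) (f n i) (f n i)) t - f n i t) l
    (𝓝 0)
  tendsto_arc_of_ne : ∀ i j, i ≠ j → Tendsto (fun n =>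
    L2norm (q + q - 2 * (q / 2)) (arc q q (q / 2) (f n i) (f n j))) l (𝓝 0)

namespace IsAsympPoissonFamily

variable {hqe : q % 2 = 0} {lam : ι → ℝ} {f : α → ι → (Fin q → ℝ) → ℂ} {c : ℕ → ι}
  {w : ℕ → BlockMark}

lemma tendsto_eLpNorm (hf : IsAsympPoissonFamily l hqe lam f) (i : ι) :
    Tendsto (fun n => eLpNorm (f n i) 2 (μpos q)) l (𝓝 ((√(lam i)).toNNReal : ENNReal)) :=
  tendsto_eLpNorm_of_tendsto_L2inner (z := lam i) (hf.memLp · i)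
    (by simpa using hf.tendsto_L2inner i i)

lemma tendsto_eLpNorm_arc_sub (hf : IsAsympPoissonFamily l hqe lam f) (i j : ι) :
    Tendsto (fun n => eLpNorm (reindex (show q + q - 2 * (q / 2) = q by omega)
      (arc q q (q / 2) (f n i) (f n j)) - (if i = j then 1 else 0 : ℂ) • f n i) 2 (μpos q)) l
      (𝓝 0) := by
  have harc n j : MemLp (arc q q (q / 2) (f n i) (f n j)) 2 (μpos (q + q - 2 * (q / 2))) :=
    memLp_arc (by omega) (by omega) (hf.memLp n i) (hf.memLp n j)
  rw [← ENNReal.ofReal_zero]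
  split_ifs with hij
  · subst hij
    refine (ENNReal.tendsto_ofReal (hf.tendsto_arc_self i)).congr fun n => ?_
    rw [one_smul, eLpNorm_eq_ofReal_L2norm ((memLp_reindex _ (harc n i)).sub (hf.memLp n i))]
    rfl
  · refine (ENNReal.tendsto_ofReal (hf.tendsto_arc_of_ne i j hij)).congr fun n => ?_
    rw [zero_smul, sub_zero, eLpNorm_reindex, eLpNorm_eq_ofReal_L2norm (harc n j)]

lemma isAsympStackTensor_iterStep (hf : IsAsympPoissonFamily l hqe lam f) (hw : IsBalanced m w)
    {k : ℕ} {z : ℂ} {x : α → (d : ℕ) × ((Fin d → ℝ) → ℂ)}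
    (hx : IsAsympStackTensor l f z ((openStack w k).map c) x) :
    IsAsympStackTensor l f (z * markWeight (lam · : ι → ℂ) c w k) ((openStack w (k + 1)).map c)
      fun n => iterStep q (x n) ((w k).order q, f n (c k)) := by
  cases hwk : w k with
  | opening =>
    rw [openStack_succ_of_opening hwk, markWeight, blockLabel_of_opening hwk, if_pos rfl,
      if_neg (by simp [hwk] : w k ≠ closing), mul_one]
    exact hx.push hf.memLp (hf.tendsto_eLpNorm _)
  | middle =>
    have hne : w k ≠ opening := by simp [hwk]
    rw [openStack_succ_of_middle hwk, markWeight, if_neg (by simp [hwk] : w k ≠ closing)]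
    rw [hw.openStack_eq_cons hne, List.map_cons] at hx ⊢
    exact hx.replace_top hf.memLp hf.tendsto_eLpNorm _ (hf.tendsto_eLpNorm_arc_sub _ _)
  | closing =>
    have hne : w k ≠ opening := by simp [hwk]
    rw [openStack_succ_of_closing hwk, markWeight, if_pos hwk]
    rw [hw.openStack_eq_cons hne, List.map_cons] at hx
    refine hx.pop hf.memLp hf.tendsto_eLpNorm (hf.isSymmFn · _) ?_
    convert hf.tendsto_L2inner (c (blockLabel w k)) (c k) using 2
    split_ifs with hc
    exacts [by rw [hc], rfl]

lemma isAsympStackTensor_iterArc (hf : IsAsympPoissonFamily l hqe lam f) (hw : IsBalanced m w)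
    (c : ℕ → ι) (k : ℕ) :
    IsAsympStackTensor l f (∏ j ∈ Finset.range (k + 1), markWeight (lam · : ι → ℂ) c w j)
      ((openStack w (k + 1)).map c) fun n => iterArc q (f n (c 0))
        (List.ofFn fun j : Fin k => ((w (j + 1)).order q, f n (c (j + 1)))) := by
  induction k with
  | zero =>
    have hw0 : w 0 = opening := by
      by_contra hne
      simpa [openStack] using hw.openStack_eq_cons hne
    have hstack : openStack w 1 = [0] := openStack_succ_of_opening hw0
    have htensor n : stackTensor (f n) [c 0] = f n (c 0) := by
      funext t
      simp [stackTensor, tensorProd, pad_of_lt]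
    refine ⟨q, fun n => f n (c 0), by simp [hstack], fun n => by simp [iterArc], (hf.memLp · _), ?_⟩
    simp [hstack, htensor, markWeight, blockLabel_of_opening hw0, hw0, tendsto_const_nhds]
  | succ k ih =>
    rw [Finset.prod_range_succ]
    convert hf.isAsympStackTensor_iterStep hw ih using 2 with n
    simp only [iterArc, List.ofFn_succ', List.concat_eq_append, List.foldl_append, List.foldl_cons,
      List.foldl_nil, Fin.val_castSucc, Fin.val_last]

lemma tendsto_scalarOf_iterArc (hf : IsAsympPoissonFamily l hqe lam f) (hw : IsBalanced m w)
    (hm : 0 < m) (c : ℕ → ι) :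
    Tendsto (fun n => scalarOf (iterArc q (f n (c 0))
      (List.ofFn fun j : Fin (m - 1) => ((w (j + 1)).order q, f n (c (j + 1)))))) l
      (𝓝 (∏ j ∈ Finset.range m, markWeight (lam · : ι → ℂ) c w j)) := by
  have hlim := hf.isAsympStackTensor_iterArc hw c (m - 1)
  rw [Nat.sub_add_cancel hm, hw.openStack_eq_nil] at hlim
  exact hlim.tendsto_scalarOf

end IsAsympPoissonFamily

end Limit

open scoped Classical in
theorem iterated_contraction_Dm_sum_limit_general {α : Type*} {l : Filter α} {q m : ℕ}
    (hq2 : 2 ≤ q) (hqe : q % 2 = 0) {lam : ℕ → ℝ} {f : α → ℕ → (Fin q → ℝ) → ℂ}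
    (hf : IsAsympPoissonFamily l hqe lam f) (hm : 0 < m) (χ : Fin m → ℕ) :
    Tendsto (fun n => ∑ r : Fin (m - 1) → Fin (q + 1) with memD16 q m r,
        scalarOf (iterArc q (f n (χ ⟨0, hm⟩)) (List.ofFn fun k : Fin (m - 1) =>
          ((r k : ℕ), f n (χ ⟨(k : ℕ) + 1, by omega⟩)))))
      l (𝓝 (∑ P with IsNCge2le m χ P, ∏ B ∈ P, (lam (B.sup χ) : ℂ))) := by
  obtain ⟨c, rfl⟩ : ∃ c : ℕ → ℕ, χ = fun x : Fin m => c x :=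
    ⟨fun k => if h : k < m then χ ⟨k, h⟩ else 0, by simp⟩
  rw [← sum_memD16_prod_markWeight hq2 hqe hm (lam · : ℕ → ℂ) c]
  refine tendsto_finsetSum _ fun r hr => ?_
  obtain ⟨hw, horder⟩ := (memD16_iff hq2 hqe hm).1 (Finset.mem_filter.1 hr).2
  simpa only [horder] using hf.tendsto_scalarOf_iterArc hw hm c

open scoped Classical in
/-- the sum over `D_m` of the scalar iterated contractions converges to
`Σ_{π ∈ NC_{≥2}(m), π ≤ χ} Π_{V ∈ π} λ_{χ(V)}`. -/
theorem iterated_contraction_Dm_sum_limit (q : ℕ) (hq2 : 2 ≤ q) (hqe : q % 2 = 0)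
    (lam : ℕ → ℝ) (hlam : ∀ i, 0 < lam i)
    (f : ℕ → ℕ → (Fin q → ℝ) → ℂ)
    (hmem : ∀ n i, MeasureTheory.MemLp (f n i) 2 (μpos q))
    (hsym : ∀ n i, IsSymmFn q (f n i))
    (hinner : ∀ i j, Filter.Tendsto (fun n => L2inner q (f n i) (f n j)) Filter.atTop
      (nhds (if i = j then (lam i : ℂ) else 0)))
    (hdiag : ∀ i, Filter.Tendsto (fun n => L2norm q (fun t =>
        reindex (show q + q - 2 * (q / 2) = q by omega)
          (arc q q (q / 2) (f n i) (f n i)) t - f n i t)) Filter.atTop (nhds 0))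
    (hdiag' : ∀ i r, 1 ≤ r → r ≤ q - 1 → r ≠ q / 2 →
      Filter.Tendsto (fun n => L2norm (q + q - 2 * r) (arc q q r (f n i) (f n i)))
        Filter.atTop (nhds 0))
    (hoff : ∀ i j, i ≠ j → ∀ r, 1 ≤ r → r ≤ q - 1 →
      Filter.Tendsto (fun n => L2norm (q + q - 2 * r) (arc q q r (f n i) (f n j)))
        Filter.atTop (nhds 0))
    (m : ℕ) (hm : 2 ≤ m) (χ : Fin m → ℕ) :
    Filter.Tendsto (fun n =>
        ∑ r ∈ Finset.univ.filter (fun r : Fin (m - 1) → Fin (q + 1) => memD16 q m r),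
          scalarOf (iterArc q (f n (χ ⟨0, by omega⟩))
            (List.ofFn fun k : Fin (m - 1) =>
              ((r k : ℕ), f n (χ ⟨(k : ℕ) + 1, by omega⟩)))))
      Filter.atTop
      (nhds (∑ P ∈ Finset.univ.filter (fun P : Finset (Finset (Fin m)) => IsNCge2le m χ P),
        ∏ B ∈ P, (lam (B.sup χ) : ℂ))) := by
  exact iterated_contraction_Dm_sum_limit_general hq2 hqe ⟨hmem, hsym, hinner, hdiag,
    fun i j hij => hoff i j hij (q / 2) (by omega) (by omega)⟩ (by omega) χ

end
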